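/- arXiv:1502.02148 — 2 statements merged into one kernel-verified Lean document; each statement's English description precedes it below -/
import Mathlib

section
/- There exists a constant C > 0 such that for every real x ≥ 1 and every natural number k with 1 ≤ k ≤ x, the ratio (number of pairs (I, J) ∈ P(x) with N(I ⊔ J) = k) / (number of pairs in P(x)) differs from r(k)/(4·ζ_{ℚ(i)}(2)·k²) by at most C·r(k)/(x^(2/3)·k^(4/3)). -/
open Real

/-- The absolute norm of an ideal of `ℤ[i]`: the cardinality of the quotient ring. -/
noncomputable def normI (I : Ideal GaussianInt) : ℕ := Nat.card (GaussianInt ⧸ I)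

/-- `P x` : pairs of nonzero ideals of `ℤ[i]` with both norms at most `x`. -/
noncomputable def P (x : ℝ) : Set (Ideal GaussianInt × Ideal GaussianInt) :=
  {p | p.1 ≠ ⊥ ∧ p.2 ≠ ⊥ ∧ (normI p.1 : ℝ) ≤ x ∧ (normI p.2 : ℝ) ≤ x}

/-- `ζ_{ℚ(i)}(2)`, the sum of `1/N(I)²` over nonzero ideals of `ℤ[i]`. -/
noncomputable def zetaQi2 : ℝ := ∑' I : {I : Ideal GaussianInt // I ≠ ⊥}, 1 / (normI I.1 : ℝ) ^ 2

/-- `r n` : the number of pairs `(a, b) ∈ ℤ × ℤ` with `a² + b² = n`. -/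
noncomputable def r (n : ℕ) : ℕ := {p : ℤ × ℤ | p.1 ^ 2 + p.2 ^ 2 = (n : ℤ)}.ncard

/-!
Dividing out the greatest common divisor, the pairs with `N (I ⊔ J) = k` correspond to an ideal of
norm `k` together with a coprime pair of ideals of norm at most `x / k`. Möbius inversion counts
coprime pairs from the number `A s` of ideals of norm at most `s`, and the main term
`A s ^ 2 ∼ (π s / 4) ^ 2` yields the factor `1 / ζ(2)`. As every nonzero ideal of `ℤ[i]` has a
unique generator in the half-open first quadrant, `A s` is the number of lattice points in a quarter
disc, which is `π s / 4 + O(s ^ (1 / 3))` by van der Corput's second-derivative test for the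
sawtooth sum along the boundary arc. Squaring gives an error `O(s ^ (4 / 3))`, and the sum of
`N I ^ (-4 / 3)` over all nonzero ideals `I` converges.
-/

open scoped FourierTransform fwdDiff

/-! ### Exponential sums -/

lemma one_sub_fourierChar_inv {θ : ℝ} (hθ : sin (π * θ) ≠ 0) :
    (1 - (𝐞 θ : ℂ))⁻¹ = (1 + (cot (π * θ) : ℂ) * Complex.I) / 2 := by
  have he : (𝐞 θ : ℂ) = (Complex.cos (π * θ) + Complex.sin (π * θ) * Complex.I) ^ 2 := by
    rw [← Complex.exp_mul_I, ← Complex.exp_nat_mul, fourierChar_apply]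
    congr 1; push_cast; ring
  have hs : Complex.sin (π * θ) ≠ 0 := by exact_mod_cast hθ
  have hsc := Complex.sin_sq_add_cos_sq (π * θ : ℂ)
  refine inv_eq_of_mul_eq_one_left ?_
  rw [he, cot_eq_cos_div_sin]
  push_cast
  field_simp
  generalize Complex.sin (π * θ) = s at *
  generalize Complex.cos (π * θ) = c at *
  linear_combination (s - c * Complex.I) * hsc -
    (s ^ 3 + 2 * c ^ 2 * s + c * s ^ 2 * Complex.I) * Complex.I_sq

lemma norm_one_sub_fourierChar (θ : ℝ) : ‖1 - (𝐞 θ : ℂ)‖ = 2 * |sin (π * θ)| := by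
  rw [norm_sub_rev, fourierChar_apply, mul_comm _ Complex.I, Complex.norm_exp_I_mul_ofReal_sub_one,
    norm_mul, norm_two, norm_eq_abs]
  congr 3; ring

lemma two_mul_le_sin_pi_mul {δ θ : ℝ} (hδ : 0 ≤ δ) (hθ : θ ∈ Set.Icc δ (1 - δ)) :
    2 * δ ≤ sin (π * θ) := by
  have two_mul_le {t : ℝ} (h0 : δ ≤ t) (h1 : t ≤ 1 / 2) : 2 * δ ≤ sin (π * t) := by
    have h := mul_le_sin (x := π * t) (by have := pi_pos; nlinarith)
      (by have := pi_pos; nlinarith)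
    rw [← mul_assoc, div_mul_cancel₀ _ pi_ne_zero] at h
    linarith
  rcases le_total θ (1 / 2) with h | h
  · exact two_mul_le hθ.1 h
  · rw [← sin_pi_sub, ← mul_one_sub]
    exact two_mul_le (by linarith [hθ.2]) (by linarith)

lemma antitoneOn_cot_pi_mul {δ : ℝ} (hδ : 0 < δ) :
    AntitoneOn (fun θ ↦ cot (π * θ)) (Set.Icc δ (1 - δ)) := by
  intro a ha b hb hab
  have hsa := two_mul_le_sin_pi_mul hδ.le ha
  have hsb := two_mul_le_sin_pi_mul hδ.le hb
  have hsub : 0 ≤ sin (π * b - π * a) := by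
    rw [← mul_sub]
    refine sin_nonneg_of_nonneg_of_le_pi (mul_nonneg pi_pos.le (by linarith)) ?_
    exact mul_le_of_le_one_right pi_pos.le (by linarith [ha.1, hb.2])
  rw [sin_sub] at hsub
  simp only [cot_eq_cos_div_sin]
  rw [div_le_div_iff₀ (by linarith) (by linarith)]
  linarith

lemma abs_cot_pi_mul_le {δ θ : ℝ} (hδ : 0 < δ) (hθ : θ ∈ Set.Icc δ (1 - δ)) :
    |cot (π * θ)| ≤ 1 / (2 * δ) := by
  have hs := two_mul_le_sin_pi_mul hδ.le hθ
  rw [cot_eq_cos_div_sin, abs_div, abs_of_pos (a := sin (π * θ)) (by linarith)]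
  exact div_le_div₀ zero_le_one (abs_cos_le_one _) (by linarith) hs

lemma norm_one_sub_fourierChar_inv_le {δ θ : ℝ} (hδ : 0 < δ) (hθ : θ ∈ Set.Icc δ (1 - δ)) :
    ‖(1 - (𝐞 θ : ℂ))⁻¹‖ ≤ 1 / (4 * δ) := by
  have hs := two_mul_le_sin_pi_mul hδ.le hθ
  rw [norm_inv, norm_one_sub_fourierChar, ← one_div]
  exact one_div_le_one_div_of_le (by positivity) (by linarith [le_abs_self (sin (π * θ))])

lemma norm_one_sub_fourierChar_inv_sub {δ a b : ℝ} (hδ : 0 < δ) (ha : a ∈ Set.Icc δ (1 - δ))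
    (hb : b ∈ Set.Icc δ (1 - δ)) (hab : a ≤ b) :
    ‖(1 - (𝐞 b : ℂ))⁻¹ - (1 - (𝐞 a : ℂ))⁻¹‖ = cot (π * a) / 2 - cot (π * b) / 2 := by
  have hsa := two_mul_le_sin_pi_mul hδ.le ha
  have hsb := two_mul_le_sin_pi_mul hδ.le hb
  have hcot : cot (π * b) ≤ cot (π * a) := antitoneOn_cot_pi_mul hδ ha hb hab
  rw [one_sub_fourierChar_inv (by linarith), one_sub_fourierChar_inv (by linarith), norm_sub_rev]
  calc _ = ‖((cot (π * a) / 2 - cot (π * b) / 2 : ℝ) : ℂ) * Complex.I‖ := by push_cast; ring_nf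
    _ = _ := by
        rw [norm_mul, Complex.norm_I, mul_one, Complex.norm_real, norm_of_nonneg (by linarith)]

lemma fourierChar_intCast (k : ℤ) : 𝐞 (k : ℝ) = 1 :=
  Circle.exp_two_pi_mul_int k

lemma inv_mul_fourierChar_sub {a b : ℝ} (k : ℤ) (h : sin (π * (b - a - k)) ≠ 0) :
    (1 - (𝐞 (b - a - k) : ℂ))⁻¹ * ((𝐞 a : ℂ) - 𝐞 b) = 𝐞 a := by
  have hne : 1 - (𝐞 (b - a - k) : ℂ) ≠ 0 := by
    rw [← norm_ne_zero_iff, norm_one_sub_fourierChar]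
    positivity
  have hb : 𝐞 b = 𝐞 a * 𝐞 (b - a - k) := by
    rw [← AddChar.map_add_eq_mul, ← mul_one (𝐞 (a + _)), ← fourierChar_intCast k,
      ← AddChar.map_add_eq_mul]
    congr 1; ring
  rw [hb, Circle.coe_mul, ← mul_one_sub, mul_left_comm, inv_mul_cancel₀ hne, mul_one]

lemma sum_mul_sub_succ (c w : ℕ → ℂ) (m : ℕ) :
    ∑ n ∈ Finset.range (m + 1), c n * (w n - w (n + 1)) =
      c 0 * w 0 - c m * w (m + 1) + ∑ n ∈ Finset.range m, (c (n + 1) - c n) * w (n + 1) := by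
  induction m with
  | zero => simp [mul_sub]
  | succ m ih =>
    rw [Finset.sum_range_succ, ih, Finset.sum_range_succ _ m]
    ring

lemma norm_sum_range_fourierChar_le (u : ℕ → ℝ) (m : ℕ) (k : ℤ) {δ : ℝ} (hδ : 0 < δ)
    (hmono : MonotoneOn (Δ_[1] u) (Set.Iic m))
    (hmem : ∀ n ≤ m, Δ_[1] u n ∈ Set.Icc (k + δ) (k + 1 - δ)) :
    ‖∑ n ∈ Finset.range (m + 1), (𝐞 (u n) : ℂ)‖ ≤ 1 / δ := by
  set θ : ℕ → ℝ := fun n ↦ u (n + 1) - u n - k with hθ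
  set c : ℕ → ℂ := fun n ↦ (1 - (𝐞 (θ n) : ℂ))⁻¹ with hc
  have hθmem : ∀ n ≤ m, θ n ∈ Set.Icc δ (1 - δ) := by
    intro n hn
    obtain ⟨hlo, hhi⟩ := hmem n hn
    constructor <;> simp only [fwdDiff, hθ] at * <;> linarith
  have hstep : ∀ n ∈ Finset.range (m + 1),
      (𝐞 (u n) : ℂ) = c n * ((𝐞 (u n) : ℂ) - 𝐞 (u (n + 1))) := by
    intro n hn
    have hs := two_mul_le_sin_pi_mul hδ.le (hθmem n (Nat.lt_succ_iff.1 (Finset.mem_range.1 hn)))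
    exact (inv_mul_fourierChar_sub k (by linarith)).symm
  have hdiff : ∀ n ∈ Finset.range m,
      ‖c (n + 1) - c n‖ = cot (π * θ n) / 2 - cot (π * θ (n + 1)) / 2 := by
    intro n hn
    have hn : n < m := Finset.mem_range.1 hn
    exact norm_one_sub_fourierChar_inv_sub hδ (hθmem n hn.le) (hθmem (n + 1) hn)
      (sub_le_sub_right (hmono hn.le hn n.le_succ) _)
  rw [Finset.sum_congr rfl hstep, sum_mul_sub_succ]
  calc _ ≤ ‖c 0‖ + ‖c m‖ + ∑ n ∈ Finset.range m, ‖c (n + 1) - c n‖ := by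
        refine (norm_add_le _ _).trans (add_le_add ((norm_sub_le _ _).trans ?_)
          ((norm_sum_le _ _).trans ?_)) <;> simp only [norm_mul, Circle.norm_coe, mul_one, le_refl]
    _ ≤ 1 / (4 * δ) + 1 / (4 * δ) + (1 / (2 * δ) / 2 + 1 / (2 * δ) / 2) := by
        have h0 := (abs_le.1 (abs_cot_pi_mul_le hδ (hθmem 0 m.zero_le))).2
        have hm := (abs_le.1 (abs_cot_pi_mul_le hδ (hθmem m le_rfl))).1
        have hc0 : ‖c 0‖ ≤ _ := norm_one_sub_fourierChar_inv_le hδ (hθmem 0 m.zero_le)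
        have hcm : ‖c m‖ ≤ _ := norm_one_sub_fourierChar_inv_le hδ (hθmem m le_rfl)
        rw [Finset.sum_congr rfl hdiff, Finset.sum_range_sub' fun n ↦ cot (π * θ n) / 2]
        linarith
    _ = 1 / δ := by field_simp; norm_num

lemma eq_Icc_min'_max'_of_ordConnected {s : Finset ℕ} (hs : (s : Set ℕ).OrdConnected)
    (hne : s.Nonempty) : s = Finset.Icc (s.min' hne) (s.max' hne) := by
  ext n
  rw [Finset.mem_Icc]
  exact ⟨fun hn ↦ ⟨s.min'_le n hn, s.le_max' n hn⟩,
    fun hn ↦ hs.out (s.min'_mem hne) (s.max'_mem hne) hn⟩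

/-- The Kusmin–Landau inequality. -/
lemma norm_sum_fourierChar_le_of_mem_Icc {u : ℕ → ℝ} {s : Finset ℕ} {k : ℤ} {δ : ℝ}
    (hs : (s : Set ℕ).OrdConnected) (hδ : 0 < δ) (hmono : MonotoneOn (Δ_[1] u) s)
    (hmem : ∀ n ∈ s, Δ_[1] u n ∈ Set.Icc (k + δ) (k + 1 - δ)) :
    ‖∑ n ∈ s, (𝐞 (u n) : ℂ)‖ ≤ 1 / δ := by
  rcases s.eq_empty_or_nonempty with rfl | hne
  · simpa using hδ.le
  obtain ⟨p, m, rfl⟩ : ∃ p m, s = Finset.Ico p (p + (m + 1)) := by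
    refine ⟨s.min' hne, s.max' hne - s.min' hne, ?_⟩
    rw [← add_assoc, Nat.add_sub_cancel' (s.min'_le _ (s.max'_mem hne)),
      Finset.Ico_add_one_right_eq_Icc]
    exact eq_Icc_min'_max'_of_ordConnected hs hne
  have hshift : ∀ n ≤ m, p + n ∈ Finset.Ico p (p + (m + 1)) := by simp
  rw [Finset.sum_Ico_eq_sum_range, add_tsub_cancel_left]
  exact norm_sum_range_fourierChar_le (fun n ↦ u (p + n)) m k hδ
    (fun i hi j hj hij ↦ hmono (hshift i hi) (hshift j hj) (Nat.add_le_add_left hij p))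
    fun n hn ↦ hmem _ (hshift n hn)

lemma norm_sum_fourierChar_le_card {ι : Type*} (u : ι → ℝ) (s : Finset ι) :
    ‖∑ i ∈ s, (𝐞 (u i) : ℂ)‖ ≤ s.card := by
  simpa only [Circle.norm_coe, Finset.sum_const, nsmul_eq_mul, mul_one] using
    norm_sum_le s fun i ↦ (𝐞 (u i) : ℂ)

lemma card_le_of_spaced {d : ℕ → ℝ} {s : Finset ℕ} {l L a : ℝ} (hl : 0 < l) (hL : 0 ≤ L)
    (hsp : ∀ m ∈ s, ∀ n ∈ s, m ≤ n → l * ((n : ℝ) - m) ≤ d n - d m)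
    (hmem : ∀ n ∈ s, d n ∈ Set.Icc a (a + L)) : (s.card : ℝ) ≤ L / l + 1 := by
  rcases s.eq_empty_or_nonempty with rfl | hne
  · rw [Finset.card_empty, Nat.cast_zero]; positivity
  set p := s.min' hne
  set q := s.max' hne
  have hpq : p ≤ q := s.min'_le _ (s.max'_mem hne)
  have hcard : s.card ≤ q - p + 1 := by
    refine (Finset.card_le_card (t := Finset.Icc p q) fun n hn ↦
      Finset.mem_Icc.2 ⟨s.min'_le n hn, s.le_max' n hn⟩).trans ?_
    rw [Nat.card_Icc]; omega
  have hspan : ((q : ℝ) - p) * l ≤ L := by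
    have := hsp p (s.min'_mem hne) q (s.max'_mem hne) hpq
    linarith [(hmem p (s.min'_mem hne)).1, (hmem q (s.max'_mem hne)).2]
  calc (s.card : ℝ) ≤ (q - p + 1 : ℕ) := Nat.cast_le.2 hcard
    _ = (q : ℝ) - p + 1 := by push_cast [Nat.cast_sub hpq]; ring
    _ ≤ L / l + 1 := by gcongr; exact (le_div_iff₀ hl).2 hspan

lemma norm_sum_fourierChar_le_of_spaced {u d : ℕ → ℝ} {s : Finset ℕ} {l a : ℝ} (hl : 0 < l)
    (hl1 : l ≤ 1) (hsp : ∀ m ∈ s, ∀ n ∈ s, m ≤ n → l * ((n : ℝ) - m) ≤ d n - d m)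
    (hmem : ∀ n ∈ s, d n ∈ Set.Icc a (a + √l)) : ‖∑ n ∈ s, (𝐞 (u n) : ℂ)‖ ≤ 2 / √l := by
  have h1 : 1 ≤ 1 / √l := one_le_one_div (sqrt_pos.2 hl) (sqrt_le_one.2 hl1)
  calc _ ≤ (s.card : ℝ) := norm_sum_fourierChar_le_card u s
    _ ≤ √l / l + 1 := card_le_of_spaced hl (sqrt_nonneg l) hsp hmem
    _ ≤ 1 / √l + 1 / √l := by rw [sqrt_div_self']; gcongr
    _ = 2 / √l := by ring

/-- On a block where `⌊Δu⌋` is constant, Kusmin–Landau controls the terms with `Δu` at distance at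
least `√l` from the integers, and the spacing of `Δu` leaves few others. -/
lemma norm_sum_fourierChar_le_of_floor_eq {u : ℕ → ℝ} {s : Finset ℕ} {k : ℤ} {l : ℝ}
    (hs : (s : Set ℕ).OrdConnected) (hl : 0 < l) (hl1 : l ≤ 1)
    (hsp : ∀ m ∈ s, ∀ n ∈ s, m ≤ n → l * ((n : ℝ) - m) ≤ Δ_[1] u n - Δ_[1] u m)
    (hfloor : ∀ n ∈ s, ⌊Δ_[1] u n⌋ = k) : ‖∑ n ∈ s, (𝐞 (u n) : ℂ)‖ ≤ 5 / √l := by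
  set d := Δ_[1] u
  set δ := √l
  have hδ : 0 < δ := sqrt_pos.2 hl
  have hmem : ∀ n ∈ s, (k : ℝ) ≤ d n ∧ d n < k + 1 := fun n hn ↦ Int.floor_eq_iff.1 (hfloor n hn)
  have hmono : MonotoneOn d s := fun m hm n hn hmn ↦ by
    have : (0 : ℝ) ≤ n - m := sub_nonneg.2 (Nat.cast_le.2 hmn)
    linarith [hsp m hm n hn hmn, mul_nonneg hl.le this]
  have hsplit : ∑ n ∈ s, (𝐞 (u n) : ℂ) = ∑ n ∈ s with d n < k + δ, (𝐞 (u n) : ℂ) +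
      (∑ n ∈ s with ¬ d n < k + δ ∧ k + 1 - δ < d n, (𝐞 (u n) : ℂ) +
        ∑ n ∈ s with ¬ d n < k + δ ∧ ¬ k + 1 - δ < d n, (𝐞 (u n) : ℂ)) := by
    rw [← Finset.filter_filter, ← Finset.filter_filter, Finset.sum_filter_add_sum_filter_not,
      Finset.sum_filter_add_sum_filter_not]
  have hspt : ∀ t ⊆ s, ∀ m ∈ t, ∀ n ∈ t, m ≤ n → l * ((n : ℝ) - m) ≤ d n - d m :=
    fun t ht m hm n hn ↦ hsp m (ht hm) n (ht hn)
  have hlow := norm_sum_fourierChar_le_of_spaced (u := u) (a := k) hl hl1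
    (hspt {n ∈ s | d n < k + δ} (s.filter_subset _)) fun n hn ↦ by
      obtain ⟨hn, h⟩ := Finset.mem_filter.1 hn
      exact ⟨(hmem n hn).1, h.le⟩
  have hhigh := norm_sum_fourierChar_le_of_spaced (u := u) (a := k + 1 - δ) hl hl1
    (hspt {n ∈ s | ¬ d n < k + δ ∧ k + 1 - δ < d n} (s.filter_subset _)) fun n hn ↦ by
      obtain ⟨hn, -, h⟩ := Finset.mem_filter.1 hn
      exact ⟨h.le, by linarith [(hmem n hn).2]⟩
  set mid := {n ∈ s | ¬ d n < k + δ ∧ ¬ k + 1 - δ < d n} with hmid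
  have hmid_iff : ∀ n, n ∈ mid ↔ n ∈ s ∧ d n ∈ Set.Icc (k + δ) (k + 1 - δ) := fun n ↦ by
    rw [hmid, Finset.mem_filter, not_lt, not_lt, Set.mem_Icc]
  have hmid_conn : (mid : Set ℕ).OrdConnected := by
    refine ⟨fun m hm n hn p hp ↦ ?_⟩
    rw [Finset.mem_coe, hmid_iff] at hm hn ⊢
    have hps := hs.out hm.1 hn.1 hp
    exact ⟨hps, hm.2.1.trans (hmono hm.1 hps hp.1), (hmono hps hn.1 hp.2).trans hn.2.2⟩
  have hmid_le := norm_sum_fourierChar_le_of_mem_Icc hmid_conn hδ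
    (hmono.mono (Finset.coe_subset.2 (s.filter_subset _))) fun n hn ↦ ((hmid_iff n).1 hn).2
  rw [hsplit]
  calc _ ≤ 2 / δ + (2 / δ + 1 / δ) :=
        norm_add_le_of_le hlow (norm_add_le_of_le hhigh hmid_le)
    _ = 5 / δ := by ring

lemma sub_mem_Icc_of_fwdDiff_mem_Icc {d : ℕ → ℝ} {N : ℕ} {l L : ℝ}
    (h : ∀ n, n + 1 < N → Δ_[1] d n ∈ Set.Icc l L) {m n : ℕ} (hmn : m ≤ n) (hn : n < N) :
    d n - d m ∈ Set.Icc (l * ((n : ℝ) - m)) (L * ((n : ℝ) - m)) := by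
  induction n, hmn using Nat.le_induction with
  | base => simp
  | succ n _ ih =>
    obtain ⟨hlo, hhi⟩ := ih (by omega)
    obtain ⟨hl, hL⟩ := h n hn
    simp only [fwdDiff] at hl hL
    push_cast
    constructor <;> linarith

lemma card_Icc_floor_le {a b : ℝ} (hab : a ≤ b) :
    ((Finset.Icc ⌊a⌋ ⌊b⌋).card : ℝ) ≤ b - a + 2 := by
  have hfloor := Int.floor_le_floor hab
  have hcard : ((Finset.Icc ⌊a⌋ ⌊b⌋).card : ℤ) = ⌊b⌋ + 1 - ⌊a⌋ := by
    rw [Int.card_Icc, Int.toNat_of_nonneg (by omega)]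
  have hcard : ((Finset.Icc ⌊a⌋ ⌊b⌋).card : ℝ) = ⌊b⌋ + 1 - ⌊a⌋ := by exact_mod_cast hcard
  linarith [Int.floor_le b, Int.lt_floor_add_one a]

lemma norm_sum_fourierChar_le_of_le_one {u : ℕ → ℝ} {N : ℕ} {l α : ℝ} (hl : 0 < l)
    (hl1 : l ≤ 1) (hα : 1 ≤ α)
    (h : ∀ n, n + 1 < N → Δ_[1] (Δ_[1] u) n ∈ Set.Icc l (α * l)) :
    ‖∑ n ∈ Finset.range N, (𝐞 (u n) : ℂ)‖ ≤ 5 * α * √l * N + 10 / √l := by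
  rcases N.eq_zero_or_pos with rfl | hN
  · simp only [Finset.range_zero, Finset.sum_empty, norm_zero]; positivity
  set d := Δ_[1] u
  have hspan : ∀ {m n : ℕ}, m ≤ n → n < N →
      d n - d m ∈ Set.Icc (l * ((n : ℝ) - m)) (α * l * ((n : ℝ) - m)) :=
    sub_mem_Icc_of_fwdDiff_mem_Icc h
  have hmono : ∀ {m n : ℕ}, m ≤ n → n < N → d m ≤ d n := fun hmn hn ↦ by
    have : (0 : ℝ) ≤ _ - _ := sub_nonneg.2 (Nat.cast_le.2 hmn)
    linarith [(hspan hmn hn).1, mul_nonneg hl.le this]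
  set K := Finset.Icc ⌊d 0⌋ ⌊d (N - 1)⌋
  have hmaps : ∀ n ∈ Finset.range N, ⌊d n⌋ ∈ K := fun n hn ↦ by
    have hn := Finset.mem_range.1 hn
    exact Finset.mem_Icc.2 ⟨Int.floor_le_floor (hmono n.zero_le hn),
      Int.floor_le_floor (hmono (by omega) (by omega))⟩
  have hblock : ∀ k ∈ K, ‖∑ n ∈ Finset.range N with ⌊d n⌋ = k, (𝐞 (u n) : ℂ)‖ ≤ 5 / √l := by
    intro k _
    refine norm_sum_fourierChar_le_of_floor_eq ⟨fun m hm n hn p hp ↦ ?_⟩ hl hl1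
      (fun m _ n hn hmn ↦ (hspan hmn (by simp_all)).1) fun n hn ↦ (Finset.mem_filter.1 hn).2
    simp only [Finset.coe_filter, Finset.mem_range, Set.mem_ofPred_eq] at hm hn ⊢
    have hpN : p < N := hp.2.trans_lt hn.1
    exact ⟨hpN, le_antisymm (hn.2 ▸ Int.floor_le_floor (hmono hp.2 hn.1))
      (hm.2 ▸ Int.floor_le_floor (hmono hp.1 hpN))⟩
  have hcard : (K.card : ℝ) ≤ α * l * N + 2 := by
    have hN1 : ((N - 1 : ℕ) : ℝ) - (0 : ℕ) ≤ N := by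
      rw [Nat.cast_zero, sub_zero]; exact Nat.cast_le.2 (N.sub_le 1)
    have := mul_le_mul_of_nonneg_left hN1 (by positivity : 0 ≤ α * l)
    linarith [card_Icc_floor_le (hmono (N - 1).zero_le (by omega)),
      (hspan (N - 1).zero_le (by omega)).2]
  rw [← Finset.sum_fiberwise_of_maps_to hmaps]
  calc _ ≤ K.card * (5 / √l) := by
        simpa only [Finset.sum_const, nsmul_eq_mul] using norm_sum_le_of_le K hblock
    _ ≤ (α * l * N + 2) * (5 / √l) := by gcongr
    _ = 5 * α * (l / √l) * N + 10 / √l := by ring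
    _ = _ := by rw [div_sqrt]

/-- Van der Corput's second-derivative test. -/
lemma norm_sum_fourierChar_le_of_fwdDiff_fwdDiff_mem_Icc {u : ℕ → ℝ} {N : ℕ} {l α : ℝ} (hl : 0 < l)
    (hα : 1 ≤ α) (h : ∀ n, n + 1 < N → Δ_[1] (Δ_[1] u) n ∈ Set.Icc l (α * l)) :
    ‖∑ n ∈ Finset.range N, (𝐞 (u n) : ℂ)‖ ≤ 5 * α * √l * N + 10 / √l := by
  rcases le_or_gt l 1 with hl1 | hl1
  · exact norm_sum_fourierChar_le_of_le_one hl hl1 hα h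
  · have hs : 1 ≤ √l := one_le_sqrt.2 hl1.le
    calc _ ≤ (N : ℝ) := by
          simpa only [Finset.card_range] using norm_sum_fourierChar_le_card u (Finset.range N)
      _ ≤ 5 * α * √l * N := le_mul_of_one_le_left (by positivity) (by nlinarith)
      _ ≤ _ := le_add_of_nonneg_right (by positivity)

/-! ### Sums of the sawtooth function -/

/-- The sawtooth function `ψ(t) = {t} - 1/2`. -/
noncomputable def sawtooth (t : ℝ) : ℝ := Int.fract t - 1 / 2

/-- The `1`-periodic primitive of `sawtooth`, normalized to have mean zero over a period. -/
noncomputable def sawtoothPrimitive (t : ℝ) : ℝ := (Int.fract t ^ 2 - Int.fract t + 1 / 6) / 2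

lemma sawtoothPrimitive_add_le (t η : ℝ) :
    sawtoothPrimitive (t + η) ≤ sawtoothPrimitive t + η * sawtooth t + η ^ 2 / 2 := by
  set s := Int.fract t with hs
  set s' := Int.fract (t + η) with hs'
  set n : ℤ := ⌊t + η⌋ - ⌊t⌋
  have hη : η = n + s' - s := by
    rw [hs, hs', Int.fract, Int.fract]; push_cast [n]; ring
  have hs'0 : 0 ≤ s' := Int.fract_nonneg _
  have hs'1 : s' < 1 := Int.fract_lt_one _
  have hn : 0 ≤ (n : ℝ) * (n - 1 + 2 * s') := by
    rcases le_or_gt n 0 with h | h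
    · rcases h.eq_or_lt with h | h
      · simp [h]
      · have : (n : ℝ) ≤ -1 := by exact_mod_cast Int.le_sub_one_of_lt h
        exact mul_nonneg_of_nonpos_of_nonpos (by linarith) (by linarith)
    · have : (1 : ℝ) ≤ n := by exact_mod_cast h
      exact mul_nonneg (by linarith) (by linarith)
  rw [sawtoothPrimitive, sawtoothPrimitive, sawtooth, ← hs, ← hs', hη]
  linarith

lemma hasSum_sawtoothPrimitive (t : ℝ) :
    HasSum (fun h : ℕ ↦ 1 / (h : ℝ) ^ 2 * cos (2 * π * h * t))
      (2 * π ^ 2 * sawtoothPrimitive t) := by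
  have hsum := hasSum_one_div_nat_pow_mul_cos (k := 1) one_ne_zero (x := Int.fract t)
    ⟨Int.fract_nonneg t, (Int.fract_lt_one t).le⟩
  have hbernoulli (s : ℝ) :
      (Polynomial.map (algebraMap ℚ ℝ) (Polynomial.bernoulli 2)).eval s = s ^ 2 - s + 1 / 6 := by
    simp [Polynomial.bernoulli, Finset.sum_range_succ, bernoulli_one, bernoulli_two,
      bernoulli_zero, Polynomial.eval_monomial]
    ring
  convert! hsum using 1
  · ext h
    rw [← Int.fract_add_floor t, Int.fract_add_intCast, Int.fract_fract, mul_add]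
    congr 1
    rw [← cos_add_int_mul_two_pi (2 * π * h * Int.fract t) (h * ⌊t⌋)]
    push_cast; ring_nf
  · rw [mul_one, hbernoulli, sawtoothPrimitive]
    norm_num [Nat.factorial]
    ring

/-- The weight with which the `h`-th harmonic of `sawtoothPrimitive` enters a difference with shift
`1 / H`, once its exponential sum is bounded by a multiple of `√h`. -/
noncomputable def shiftWeight (H h : ℕ) : ℝ := min 1 ((h : ℝ) / H) * (√h / (h : ℝ) ^ 2)

lemma shiftWeight_nonneg (H h : ℕ) : 0 ≤ shiftWeight H h := by
  unfold shiftWeight; positivity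

lemma one_div_sqrt_succ_le (n : ℕ) : 1 / √(n + 1 : ℝ) ≤ 2 * √(n + 1 : ℝ) - 2 * √(n : ℝ) := by
  have ha : √(n + 1 : ℝ) ^ 2 = n + 1 := sq_sqrt (by positivity)
  have hb : √(n : ℝ) ^ 2 = n := sq_sqrt (by positivity)
  rw [div_le_iff₀ (by positivity)]
  linarith [sq_nonneg (√(n + 1 : ℝ) - √(n : ℝ))]

lemma one_div_sqrt_succ_pow_three_le {n : ℕ} (hn : 0 < n) :
    1 / √(n + 1 : ℝ) ^ 3 ≤ 2 / √(n : ℝ) - 2 / √(n + 1 : ℝ) := by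
  have hle : √(n : ℝ) ≤ √(n + 1 : ℝ) := sqrt_le_sqrt (by linarith)
  have hsq : √(n + 1 : ℝ) ^ 2 - √(n : ℝ) ^ 2 = 1 := by
    rw [sq_sqrt (by positivity), sq_sqrt (by positivity)]; ring
  have hb : 0 < √(n : ℝ) := sqrt_pos.2 (by exact_mod_cast hn)
  have ha : 0 < √(n + 1 : ℝ) := hb.trans_le hle
  generalize √(n + 1 : ℝ) = a at *
  generalize √(n : ℝ) = b at *
  calc 1 / a ^ 3 = 2 / (a * a * (a + a)) := by field_simp; norm_num
    _ ≤ 2 / (a * b * (a + b)) := by gcongr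
    _ = 2 / b - 2 / a := by field_simp; linear_combination -hsq

lemma sum_shiftWeight_le_of_le {H M : ℕ} (hM : M ≤ H) :
    ∑ h ∈ Finset.range (M + 1), shiftWeight H h ≤ 2 * √M / H := by
  induction M with
  | zero => simp [shiftWeight]
  | succ M ih =>
    have hsq : √(M + 1 : ℝ) ^ 2 = M + 1 := sq_sqrt (by positivity)
    have hterm : shiftWeight H (M + 1) ≤ (2 * √(M + 1 : ℝ) - 2 * √M) / H := by
      calc shiftWeight H (M + 1) ≤ ((M + 1 : ℕ) : ℝ) / H * (√(M + 1 : ℕ) / ((M + 1 : ℕ) : ℝ) ^ 2) :=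
            mul_le_mul_of_nonneg_right (min_le_right _ _) (by positivity)
        _ = 1 / √(M + 1 : ℝ) / H := by
            push_cast; rw [← hsq, sqrt_sq (sqrt_nonneg _)]; field_simp
        _ ≤ _ := by gcongr; exact one_div_sqrt_succ_le M
    rw [Finset.sum_range_succ]
    calc _ ≤ 2 * √M / H + (2 * √(M + 1 : ℝ) - 2 * √M) / H := add_le_add (ih (by omega)) hterm
      _ = 2 * √(M + 1 : ℕ) / H := by push_cast; ring

lemma sum_shiftWeight_le_of_ge {H M : ℕ} (hH : 0 < H) (hM : H ≤ M) :
    ∑ h ∈ Finset.range (M + 1), shiftWeight H h ≤ 4 / √H - 2 / √M := by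
  induction M, hM using Nat.le_induction with
  | base =>
    calc _ ≤ 2 * (√(H : ℝ) / H) := by
          rw [← mul_div_assoc]; exact sum_shiftWeight_le_of_le le_rfl
      _ = 4 / √H - 2 / √H := by rw [sqrt_div_self']; ring
  | succ M hM ih =>
    have hsq : √(M + 1 : ℝ) ^ 2 = M + 1 := sq_sqrt (by positivity)
    have hterm : shiftWeight H (M + 1) ≤ 2 / √M - 2 / √(M + 1 : ℝ) := by
      calc shiftWeight H (M + 1) ≤ 1 * (√(M + 1 : ℕ) / ((M + 1 : ℕ) : ℝ) ^ 2) :=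
            mul_le_mul_of_nonneg_right (min_le_left _ _) (by positivity)
        _ = 1 / √(M + 1 : ℝ) ^ 3 := by
            push_cast; rw [← hsq, sqrt_sq (sqrt_nonneg _)]; field_simp
        _ ≤ _ := one_div_sqrt_succ_pow_three_le (hH.trans_le hM)
    rw [Finset.sum_range_succ]
    push_cast
    linarith

lemma sum_shiftWeight_le {H : ℕ} (hH : 0 < H) (M : ℕ) :
    ∑ h ∈ Finset.range M, shiftWeight H h ≤ 4 / √H :=
  calc _ ≤ ∑ h ∈ Finset.range (M + H + 1), shiftWeight H h :=
        Finset.sum_le_sum_of_subset_of_nonneg (Finset.range_mono (by omega))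
          fun h _ _ ↦ shiftWeight_nonneg H h
    _ ≤ 4 / √H - 2 / √(M + H : ℕ) := sum_shiftWeight_le_of_ge hH (Nat.le_add_left H M)
    _ ≤ 4 / √H := sub_le_self _ (by positivity)

lemma fourierChar_re (t : ℝ) : (𝐞 t : ℂ).re = cos (2 * π * t) :=
  Complex.exp_ofReal_mul_I_re _

lemma norm_fourierChar_sub_one_le (t : ℝ) : ‖(𝐞 t : ℂ) - 1‖ ≤ 2 * π * min 1 |t| := by
  rw [mul_min_of_nonneg _ _ (by positivity), le_min_iff]
  constructor
  · calc ‖(𝐞 t : ℂ) - 1‖ ≤ ‖(𝐞 t : ℂ)‖ + ‖(1 : ℂ)‖ := norm_sub_le _ _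
      _ ≤ 2 * π * 1 := by rw [Circle.norm_coe, norm_one]; linarith [pi_gt_three]
  · rw [fourierChar_apply, mul_comm _ Complex.I]
    refine norm_exp_I_mul_ofReal_sub_one_le.trans_eq ?_
    rw [norm_eq_abs, abs_mul, abs_of_pos two_pi_pos]

section ExponentialSumBound

variable {ι : Type*} {s : Finset ι} {v : ι → ℝ} {a b : ℝ} {H : ℕ}

lemma abs_sum_cos_shift_sub_le {h : ℕ} (hh : 0 < h) (ha : 0 ≤ a) (hb : 0 ≤ b)
    (hexp : ‖∑ i ∈ s, (𝐞 (h * v i) : ℂ)‖ ≤ a * √h + b / √h) {η : ℝ} (hη : |η| ≤ 1 / H) :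
    |∑ i ∈ s, (1 / (h : ℝ) ^ 2 * cos (2 * π * h * (v i + η)) -
        1 / (h : ℝ) ^ 2 * cos (2 * π * h * v i))| ≤
      2 * π * (a * shiftWeight H h + b / H * shiftWeight 1 h) := by
  have hh0 : (0 : ℝ) < h := by exact_mod_cast hh
  set S : ℂ := ∑ i ∈ s, (𝐞 (h * v i) : ℂ)
  set W := min 1 ((h : ℝ) / H)
  have hre : ∑ i ∈ s, (1 / (h : ℝ) ^ 2 * cos (2 * π * h * (v i + η)) -
      1 / (h : ℝ) ^ 2 * cos (2 * π * h * v i)) =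
        1 / (h : ℝ) ^ 2 * (S * ((𝐞 (h * η) : ℂ) - 1)).re := by
    rw [Finset.sum_mul, Complex.re_sum, Finset.mul_sum]
    refine Finset.sum_congr rfl fun i _ ↦ ?_
    rw [mul_sub, mul_one, ← Circle.coe_mul, ← AddChar.map_add_eq_mul, Complex.sub_re,
      fourierChar_re, fourierChar_re]
    ring_nf
  have hshift : ‖(𝐞 (h * η) : ℂ) - 1‖ ≤ 2 * π * W := by
    have hle : |h * η| ≤ h / H := by
      rw [abs_mul, abs_of_pos hh0, div_eq_mul_one_div]; gcongr
    refine (norm_fourierChar_sub_one_le _).trans ?_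
    gcongr
    exact min_le_min_left 1 hle
  have hw1 : shiftWeight 1 h = √h / (h : ℝ) ^ 2 := by
    rw [shiftWeight, Nat.cast_one, div_one, min_eq_left (by exact_mod_cast hh), one_mul]
  rw [hre, abs_mul, abs_of_pos (by positivity)]
  calc _ ≤ 1 / (h : ℝ) ^ 2 * ((a * √h + b / √h) * (2 * π * W)) := by
        gcongr
        refine (Complex.abs_re_le_norm _).trans ?_
        rw [norm_mul]
        gcongr
    _ = 2 * π * (a * shiftWeight H h + b / (√h * (h : ℝ) ^ 2) * W) := by
        rw [shiftWeight]; ring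
    _ ≤ 2 * π * (a * shiftWeight H h + b / (√h * (h : ℝ) ^ 2) * (h / H)) := by
        gcongr; exact min_le_right _ _
    _ = 2 * π * (a * shiftWeight H h + b / H * (h / √h / (h : ℝ) ^ 2)) := by ring
    _ = 2 * π * (a * shiftWeight H h + b / H * shiftWeight 1 h) := by rw [div_sqrt, hw1]

lemma abs_sum_sawtoothPrimitive_shift_sub_le (ha : 0 ≤ a) (hb : 0 ≤ b)
    (hexp : ∀ h : ℕ, 0 < h → ‖∑ i ∈ s, (𝐞 (h * v i) : ℂ)‖ ≤ a * √h + b / √h)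
    (hH : 0 < H) {η : ℝ} (hη : |η| ≤ 1 / H) :
    |∑ i ∈ s, (sawtoothPrimitive (v i + η) - sawtoothPrimitive (v i))| ≤
      4 * a / √H + 4 * b / H := by
  have hsum : HasSum (fun h : ℕ ↦ ∑ i ∈ s, (1 / (h : ℝ) ^ 2 * cos (2 * π * h * (v i + η)) -
      1 / (h : ℝ) ^ 2 * cos (2 * π * h * v i)))
      (2 * π ^ 2 * ∑ i ∈ s, (sawtoothPrimitive (v i + η) - sawtoothPrimitive (v i))) := by
    rw [Finset.mul_sum]
    simp only [mul_sub (2 * π ^ 2)]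
    exact hasSum_sum fun i _ ↦ (hasSum_sawtoothPrimitive _).sub (hasSum_sawtoothPrimitive _)
  have hterm (h : ℕ) : |∑ i ∈ s, (1 / (h : ℝ) ^ 2 * cos (2 * π * h * (v i + η)) -
        1 / (h : ℝ) ^ 2 * cos (2 * π * h * v i))| ≤
      2 * π * (a * shiftWeight H h + b / H * shiftWeight 1 h) := by
    rcases h.eq_zero_or_pos with rfl | hh
    · simp [shiftWeight]
    · exact abs_sum_cos_shift_sub_le hh ha hb (hexp h hh) hη
  have hbound : |2 * π ^ 2 * ∑ i ∈ s, (sawtoothPrimitive (v i + η) - sawtoothPrimitive (v i))| ≤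
      2 * π * (a * (4 / √H) + b / H * 4) := by
    refine le_of_tendsto hsum.tendsto_sum_nat.abs (Filter.Eventually.of_forall fun M ↦ ?_)
    have hw1 := sum_shiftWeight_le one_pos M
    rw [Nat.cast_one, sqrt_one, div_one] at hw1
    refine (Finset.abs_sum_le_sum_abs _ _).trans ((Finset.sum_le_sum fun h _ ↦ hterm h).trans ?_)
    rw [← Finset.mul_sum, Finset.sum_add_distrib, ← Finset.mul_sum, ← Finset.mul_sum]
    gcongr
    exact sum_shiftWeight_le hH M
  rw [abs_mul, abs_of_pos (by positivity)] at hbound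
  calc _ ≤ π * |∑ i ∈ s, (sawtoothPrimitive (v i + η) - sawtoothPrimitive (v i))| :=
        le_mul_of_one_le_left (abs_nonneg _) (by linarith [pi_gt_three])
    _ ≤ a * (4 / √H) + b / H * 4 :=
        le_of_mul_le_mul_left (by linarith) two_pi_pos
    _ = _ := by ring

/-- The convexity bound `sawtoothPrimitive_add_le` with the shifts `±1 / H` transfers exponential
sum bounds from the primitive to `sawtooth`. -/
lemma abs_sum_sawtooth_le (ha : 0 ≤ a) (hb : 0 ≤ b)
    (hexp : ∀ h : ℕ, 0 < h → ‖∑ i ∈ s, (𝐞 (h * v i) : ℂ)‖ ≤ a * √h + b / √h)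
    (hH : 0 < H) :
    |∑ i ∈ s, sawtooth (v i)| ≤ 4 * a * √H + 4 * b + s.card / H := by
  have hH0 : (0 : ℝ) < H := by exact_mod_cast hH
  have hconvex (η : ℝ) : ∑ i ∈ s, (sawtoothPrimitive (v i + η) - sawtoothPrimitive (v i)) ≤
      η * ∑ i ∈ s, sawtooth (v i) + s.card * (η ^ 2 / 2) := by
    rw [Finset.mul_sum, ← nsmul_eq_mul, ← Finset.sum_const, ← Finset.sum_add_distrib]
    exact Finset.sum_le_sum fun i _ ↦ by linarith [sawtoothPrimitive_add_le (v i) η]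
  have hshift {η : ℝ} (hη : |η| ≤ 1 / H) :=
    (abs_le.1 (abs_sum_sawtoothPrimitive_shift_sub_le ha hb hexp hH hη)).1
  have hpos : |(1 / H : ℝ)| ≤ 1 / H := by rw [abs_of_pos (by positivity)]
  have key : |1 / H * ∑ i ∈ s, sawtooth (v i)| ≤
      4 * a / √H + 4 * b / H + s.card * ((1 / H : ℝ) ^ 2 / 2) := by
    have hup := hshift hpos
    have hdown := hshift (η := -(1 / H)) (by rwa [abs_neg])
    have hcup := hconvex (1 / H)
    have hcdown := hconvex (-(1 / H))
    rw [neg_sq, neg_mul] at hcdown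
    rw [abs_le]
    constructor <;> linarith
  rw [abs_mul, abs_of_pos (one_div_pos.2 hH0), one_div, inv_mul_le_iff₀ hH0] at key
  calc _ ≤ _ := key
    _ = 4 * a * (H / √H) + 4 * b + s.card / H / 2 := by field_simp
    _ ≤ 4 * a * √H + 4 * b + s.card / H := by
        have hcard : (0 : ℝ) ≤ s.card / H := by positivity
        rw [div_sqrt]; linarith

end ExponentialSumBound

lemma norm_sum_fourierChar_neg {ι : Type*} (s : Finset ι) (u : ι → ℝ) :
    ‖∑ i ∈ s, (𝐞 (-u i) : ℂ)‖ = ‖∑ i ∈ s, (𝐞 (u i) : ℂ)‖ := by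
  simp only [AddChar.map_neg_eq_inv, Circle.coe_inv_eq_conj, ← map_sum, RCLike.norm_conj]

/-- The van der Corput bound for sums of the sawtooth function. -/
lemma abs_sum_sawtooth_le_of_fwdDiff_fwdDiff_mem_Icc {v : ℕ → ℝ} {N : ℕ} {l α : ℝ} (hl : 0 < l)
    (hα : 1 ≤ α) (h : ∀ n, n + 1 < N → -Δ_[1] (Δ_[1] v) n ∈ Set.Icc l (α * l))
    {H : ℕ} (hH : 0 < H) :
    |∑ n ∈ Finset.range N, sawtooth (v n)| ≤ 20 * α * √l * N * √H + 40 / √l + N / H := by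
  have hexp (k : ℕ) (hk : 0 < k) : ‖∑ n ∈ Finset.range N, (𝐞 (k * v n) : ℂ)‖ ≤
      5 * α * √l * N * √k + 10 / √l / √k := by
    have hk0 : (0 : ℝ) < k := by exact_mod_cast hk
    rw [← norm_sum_fourierChar_neg]
    refine (norm_sum_fourierChar_le_of_fwdDiff_fwdDiff_mem_Icc (mul_pos hk0 hl) hα
      fun n hn ↦ ?_).trans_eq ?_
    · have hdiff : Δ_[1] (Δ_[1] fun n ↦ -(k * v n)) n = k * -Δ_[1] (Δ_[1] v) n := by
        simp only [fwdDiff]; ring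
      rw [hdiff, mul_left_comm α]
      exact ⟨mul_le_mul_of_nonneg_left (h n hn).1 hk0.le,
        mul_le_mul_of_nonneg_left (h n hn).2 hk0.le⟩
    · rw [sqrt_mul hk0.le]; field_simp
  refine (abs_sum_sawtooth_le (by positivity) (by positivity) hexp hH).trans_eq ?_
  rw [Finset.card_range]; ring

/-! ### Lattice points in a quarter disc -/

/-- The points `(a, b)` of `ℕ × ℕ` with `0 < a` in the closed disc of radius `√x`. The axis `a = 0`
is left out so that the quarter turns of this set tile the nonzero lattice points of the disc. -/
noncomputable def quarterDisc (x : ℝ) : Finset (ℕ × ℕ) :=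
  (Finset.range (⌊√x⌋₊ + 1) ×ˢ Finset.range (⌊√x⌋₊ + 1)).filter
    fun p ↦ 0 < p.1 ∧ (p.1 : ℝ) ^ 2 + (p.2 : ℝ) ^ 2 ≤ x

lemma mem_quarterDisc {x : ℝ} {p : ℕ × ℕ} :
    p ∈ quarterDisc x ↔ 0 < p.1 ∧ (p.1 : ℝ) ^ 2 + (p.2 : ℝ) ^ 2 ≤ x := by
  simp only [quarterDisc, Finset.mem_filter, Finset.mem_product, Finset.mem_range, Nat.lt_succ_iff,
    and_iff_right_iff_imp]
  rintro ⟨-, hp⟩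
  exact ⟨Nat.le_floor (Real.le_sqrt_of_sq_le (by nlinarith)),
    Nat.le_floor (Real.le_sqrt_of_sq_le (by nlinarith))⟩

lemma card_quarterDisc_filter_snd_eq_zero {x : ℝ} (hx : 0 ≤ x) :
    ((quarterDisc x).filter fun p ↦ p.2 = 0).card = ⌊√x⌋₊ := by
  have : (quarterDisc x).filter (fun p ↦ p.2 = 0) = Finset.Icc 1 ⌊√x⌋₊ ×ˢ {0} := by
    ext ⟨a, b⟩
    simp only [Finset.mem_filter, mem_quarterDisc, Finset.mem_product, Finset.mem_Icc,
      Finset.mem_singleton, Nat.le_floor_iff (Real.sqrt_nonneg x),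
      Real.le_sqrt (Nat.cast_nonneg a) hx]
    refine and_congr_left fun hb ↦ ?_
    simp [hb, Nat.one_le_iff_ne_zero, Nat.pos_iff_ne_zero]
  rw [this, Finset.card_product, Nat.card_Icc]
  simp

lemma card_quarterDisc_filter_fst_le {x : ℝ} {M : ℕ} (hM : (M : ℝ) ^ 2 ≤ x) :
    ((quarterDisc x).filter fun p ↦ 0 < p.2 ∧ p.1 ≤ M).card =
      ∑ a ∈ Finset.range M, ⌊√(x - ((a : ℝ) + 1) ^ 2)⌋₊ := by
  rw [Finset.card_eq_sum_card_fiberwise (f := fun p ↦ p.1 - 1) (t := Finset.range M)]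
  · refine Finset.sum_congr rfl fun a ha ↦ ?_
    have haM : (a : ℝ) + 1 ≤ M := by exact_mod_cast Finset.mem_range.1 ha
    have hax : 0 ≤ x - ((a : ℝ) + 1) ^ 2 := by nlinarith [Nat.cast_nonneg (α := ℝ) a]
    have : ((quarterDisc x).filter fun p ↦ 0 < p.2 ∧ p.1 ≤ M).filter (fun p ↦ p.1 - 1 = a) =
        {a + 1} ×ˢ Finset.Icc 1 ⌊√(x - ((a : ℝ) + 1) ^ 2)⌋₊ := by
      ext ⟨c, b⟩
      have hc : 0 < c ∧ c - 1 = a ↔ c = a + 1 := by omega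
      simp only [Finset.mem_filter, mem_quarterDisc, Finset.mem_product, Finset.mem_Icc,
        Finset.mem_singleton, Nat.le_floor_iff (Real.sqrt_nonneg _),
        Real.le_sqrt (Nat.cast_nonneg b) hax, ← hc]
      have := Finset.mem_range.1 ha
      constructor
      · rintro ⟨⟨⟨hc0, hcb⟩, hb, -⟩, hca⟩
        obtain rfl := hc.1 ⟨hc0, hca⟩
        push_cast at hcb
        exact ⟨⟨hc0, hca⟩, hb, by linarith⟩
      · rintro ⟨⟨hc0, hca⟩, hb, hab⟩
        obtain rfl := hc.1 ⟨hc0, hca⟩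
        push_cast
        exact ⟨⟨⟨hc0, by linarith⟩, hb, by omega⟩, hca⟩
    rw [this, Finset.card_product, Nat.card_Icc]
    simp
  · intro p hp
    have hp := Finset.mem_filter.1 hp
    have := (mem_quarterDisc.1 hp.1).1
    simp only [Finset.coe_range, Set.mem_Iio]
    omega

lemma card_quarterDisc_filter_snd_le (x : ℝ) (M : ℕ) :
    ((quarterDisc x).filter fun p ↦ 0 < p.2 ∧ p.2 ≤ M).card =
      ((quarterDisc x).filter fun p ↦ 0 < p.2 ∧ p.1 ≤ M).card := by
  refine Finset.card_equiv (Equiv.prodComm ℕ ℕ) fun p ↦ ?_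
  simp only [Finset.mem_filter, mem_quarterDisc, Equiv.prodComm_apply, Prod.fst_swap,
    Prod.snd_swap, add_comm ((p.2 : ℝ) ^ 2)]
  tauto

lemma quarterDisc_filter_union {x : ℝ} {M : ℕ} (hM : x < 2 * ((M : ℝ) + 1) ^ 2) :
    ((quarterDisc x).filter fun p ↦ 0 < p.2 ∧ p.1 ≤ M) ∪
      ((quarterDisc x).filter fun p ↦ 0 < p.2 ∧ p.2 ≤ M) =
        (quarterDisc x).filter fun p ↦ ¬p.2 = 0 := by
  rw [← Finset.filter_or]
  refine Finset.filter_congr fun p hp ↦ ?_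
  have : p.1 ≤ M ∨ p.2 ≤ M := by
    by_contra! h
    have h₁ : (M : ℝ) + 1 ≤ p.1 := by exact_mod_cast h.1
    have h₂ : (M : ℝ) + 1 ≤ p.2 := by exact_mod_cast h.2
    nlinarith [(mem_quarterDisc.1 hp).2, Nat.cast_nonneg (α := ℝ) M]
  lia

lemma quarterDisc_filter_inter {x : ℝ} {M : ℕ} (hM : 2 * (M : ℝ) ^ 2 ≤ x) :
    ((quarterDisc x).filter fun p ↦ 0 < p.2 ∧ p.1 ≤ M) ∩
      ((quarterDisc x).filter fun p ↦ 0 < p.2 ∧ p.2 ≤ M) =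
        Finset.Icc 1 M ×ˢ Finset.Icc 1 M := by
  ext ⟨a, b⟩
  simp only [Finset.mem_inter, Finset.mem_filter, mem_quarterDisc, Finset.mem_product,
    Finset.mem_Icc]
  refine ⟨by lia, fun ⟨⟨ha, haM⟩, hb, hbM⟩ ↦ ?_⟩
  have haM' : (a : ℝ) ^ 2 ≤ (M : ℝ) ^ 2 := by gcongr
  have hbM' : (b : ℝ) ^ 2 ≤ (M : ℝ) ^ 2 := by gcongr
  exact ⟨⟨⟨ha, by linarith⟩, hb, haM⟩, ⟨ha, by linarith⟩, hb, hbM⟩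

lemma card_quarterDisc_add_sq {x : ℝ} {M : ℕ} (hM : 2 * (M : ℝ) ^ 2 ≤ x)
    (hM' : x < 2 * ((M : ℝ) + 1) ^ 2) :
    (quarterDisc x).card + M ^ 2 =
      ⌊√x⌋₊ + 2 * ∑ a ∈ Finset.range M, ⌊√(x - ((a : ℝ) + 1) ^ 2)⌋₊ := by
  have hMx : (M : ℝ) ^ 2 ≤ x := by linarith [sq_nonneg (M : ℝ)]
  have hUV := Finset.card_union_add_card_inter
    ((quarterDisc x).filter fun p ↦ 0 < p.2 ∧ p.1 ≤ M)
    ((quarterDisc x).filter fun p ↦ 0 < p.2 ∧ p.2 ≤ M)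
  rw [quarterDisc_filter_union hM', quarterDisc_filter_inter hM, card_quarterDisc_filter_snd_le,
    card_quarterDisc_filter_fst_le hMx, Finset.card_product, Nat.card_Icc, Nat.add_sub_cancel]
    at hUV
  have hsplit := Finset.card_filter_add_card_filter_not (s := quarterDisc x) fun p ↦ p.2 = 0
  rw [card_quarterDisc_filter_snd_eq_zero ((sq_nonneg _).trans hMx)] at hsplit
  rw [pow_two]
  lia

/-! ### The Gauss circle problem -/

lemma exists_fwdDiff_fwdDiff_eq {f f' f'' : ℝ → ℝ} {a : ℝ}
    (hf : ∀ t ∈ Set.Icc a (a + 2), HasDerivAt f (f' t) t)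
    (hf' : ∀ t ∈ Set.Icc a (a + 2), HasDerivAt f' (f'' t) t) :
    ∃ t ∈ Set.Icc a (a + 2), Δ_[1] (Δ_[1] f) a = f'' t := by
  have hΔ : ∀ t ∈ Set.Icc a (a + 1), HasDerivAt (Δ_[1] f) (Δ_[1] f' t) t := fun t ht ↦
    ((hf (t + 1) ⟨by linarith [ht.1], by linarith [ht.2]⟩).comp_add_const t 1).sub
      (hf t ⟨ht.1, by linarith [ht.2]⟩)
  obtain ⟨c, hc, hc'⟩ := exists_hasDerivAt_eq_slope (Δ_[1] f) (Δ_[1] f') (lt_add_one a)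
    (fun t ht ↦ (hΔ t ht).continuousAt.continuousWithinAt)
    fun t ht ↦ hΔ t (Set.Ioo_subset_Icc_self ht)
  have hsub : Set.Icc c (c + 1) ⊆ Set.Icc a (a + 2) :=
    Set.Icc_subset_Icc hc.1.le (by linarith [hc.2])
  obtain ⟨t, ht, ht'⟩ := exists_hasDerivAt_eq_slope f' f'' (lt_add_one c)
    (fun t ht ↦ (hf' t (hsub ht)).continuousAt.continuousWithinAt)
    fun t ht ↦ hf' t (hsub (Set.Ioo_subset_Icc_self ht))
  rw [add_sub_cancel_left, div_one] at hc' ht'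
  exact ⟨t, hsub (Set.Ioo_subset_Icc_self ht), by rw [ht']; exact hc'.symm⟩

lemma abs_sum_sub_integral_le {f f' f'' : ℝ → ℝ} {M : ℕ} {ζ : ℝ}
    (hf : ∀ t ∈ Set.Icc 0 (M : ℝ), HasDerivAt f (f' t) t)
    (hf' : ∀ t ∈ Set.Icc 0 (M : ℝ), HasDerivAt f' (f'' t) t)
    (hζ : ∀ t ∈ Set.Icc 0 (M : ℝ), |f'' t| ≤ ζ) :
    |∑ a ∈ Finset.range M, f (a + 1) - ((∫ t in (0 : ℝ)..M, f t) + (f M - f 0) / 2)| ≤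
      M * ζ / 12 := by
  rcases M.eq_zero_or_pos with rfl | hM
  · simp
  have hM0 : (0 : ℝ) < M := Nat.cast_pos.2 hM
  have huIcc : Set.uIcc 0 (M : ℝ) = Set.Icc 0 (M : ℝ) := Set.uIcc_of_le hM0.le
  have hunique : UniqueDiffOn ℝ (Set.Icc 0 (M : ℝ)) := uniqueDiffOn_Icc hM0
  have hderiv : Set.EqOn (derivWithin f (Set.Icc 0 (M : ℝ))) f' (Set.Icc 0 M) := fun t ht ↦
    (hf t ht).hasDerivWithinAt.derivWithin (hunique t ht)
  have hderiv₂ (t : ℝ) (ht : t ∈ Set.Icc 0 (M : ℝ)) :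
      HasDerivWithinAt (derivWithin f (Set.Icc 0 (M : ℝ))) (f'' t) (Set.Icc 0 M) t :=
    (hf' t ht).hasDerivWithinAt.congr_of_mem hderiv ht
  have hbound (t : ℝ) : |iteratedDerivWithin 2 f (Set.Icc 0 (M : ℝ)) t| ≤ ζ := by
    rw [iteratedDerivWithin_succ, iteratedDerivWithin_one]
    by_cases ht : t ∈ Set.Icc 0 (M : ℝ)
    · rw [(hderiv₂ t ht).derivWithin (hunique t ht)]
      exact hζ t ht
    · rw [derivWithin_zero_of_notMem_closure (by rwa [isClosed_Icc.closure_eq]), abs_zero]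
      exact (abs_nonneg _).trans (hζ 0 ⟨le_rfl, hM0.le⟩)
  have key := trapezoidal_error_le (f := f) (a := 0) (b := M) (ζ := ζ)
    (huIcc ▸ fun t ht ↦ (hf t ht).differentiableAt.differentiableWithinAt)
    (huIcc ▸ fun t ht ↦ (hderiv₂ t ht).differentiableWithinAt) (huIcc ▸ hbound) hM
  obtain ⟨N, rfl⟩ : ∃ N, M = N + 1 := ⟨M - 1, by lia⟩
  have hsum : trapezoidal_integral f (N + 1) 0 ((N + 1 : ℕ) : ℝ) =
      ∑ a ∈ Finset.range (N + 1), f (a + 1) - (f (N + 1 : ℕ) - f 0) / 2 := by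
    rw [trapezoidal_integral, sub_zero, div_self hM0.ne', one_mul, Nat.add_sub_cancel,
      Finset.sum_range_succ]
    simp only [zero_add, mul_div_assoc, div_self hM0.ne', mul_one]
    push_cast
    ring
  rw [trapezoidal_error, hsum, sub_zero, abs_of_pos hM0] at key
  refine (le_of_eq ?_).trans (key.trans_eq ?_)
  · congr 1
    ring
  · field_simp

lemma abs_sawtooth_le (t : ℝ) : |sawtooth t| ≤ 1 / 2 := by
  rw [sawtooth, abs_le]
  constructor <;> linarith [Int.fract_nonneg t, Int.fract_lt_one t]

section Arc

variable {R t : ℝ}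

lemma hasDerivAt_arc (ht : t ^ 2 < R ^ 2) :
    HasDerivAt (fun t ↦ √(R ^ 2 - t ^ 2)) (-t / √(R ^ 2 - t ^ 2)) t := by
  have h0 : 0 < R ^ 2 - t ^ 2 := sub_pos.2 ht
  convert! ((hasDerivAt_pow 2 t).const_sub (R ^ 2)).sqrt h0.ne' using 1
  have := Real.sqrt_pos.2 h0
  field_simp
  norm_num [mul_comm]

lemma hasDerivAt_deriv_arc (ht : t ^ 2 < R ^ 2) :
    HasDerivAt (fun t ↦ -t / √(R ^ 2 - t ^ 2)) (-(R ^ 2 / √(R ^ 2 - t ^ 2) ^ 3)) t := by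
  have hs := Real.sqrt_pos.2 (sub_pos.2 ht)
  have hsq := Real.sq_sqrt (sub_pos.2 ht).le
  convert! (hasDerivAt_neg t).div (hasDerivAt_arc ht) hs.ne' using 1
  generalize √(R ^ 2 - t ^ 2) = s at *
  field_simp
  linear_combination hsq

lemma sq_div_arc_pow_three_mem_Icc (hR : 0 < R) (ht : 2 * t ^ 2 ≤ R ^ 2) :
    R ^ 2 / √(R ^ 2 - t ^ 2) ^ 3 ∈ Set.Icc (1 / R) (3 * (1 / R)) := by
  have h0 : 0 < R ^ 2 - t ^ 2 := by nlinarith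
  have hs := Real.sqrt_pos.2 h0
  have hsq := Real.sq_sqrt h0.le
  have hsR : √(R ^ 2 - t ^ 2) ≤ R := Real.sqrt_le_iff.2 ⟨hR.le, by linarith [sq_nonneg t]⟩
  generalize √(R ^ 2 - t ^ 2) = s at *
  have hRs : 2 / 3 * R ≤ s := le_of_sq_le_sq (by nlinarith) hs.le
  constructor
  · rw [div_le_div_iff₀ hR (by positivity), one_mul, ← pow_succ]
    gcongr
  · rw [mul_one_div, div_le_div_iff₀ (by positivity) hR]
    nlinarith [mul_le_mul hRs (show R ^ 2 ≤ 2 * s ^ 2 by linarith) (by positivity) hs.le]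

lemma neg_fwdDiff_fwdDiff_arc_mem_Icc {n : ℕ} (hR : 0 < R)
    (hn : 2 * ((n : ℝ) + 3) ^ 2 ≤ R ^ 2) :
    -Δ_[1] (Δ_[1] fun n : ℕ ↦ √(R ^ 2 - ((n : ℝ) + 1) ^ 2)) n ∈ Set.Icc (1 / R) (3 * (1 / R)) := by
  have hle {t : ℝ} (ht : t ∈ Set.Icc ((n : ℝ) + 1) (n + 1 + 2)) : 2 * t ^ 2 ≤ R ^ 2 := by
    have := ht.2
    nlinarith [ht.1, Nat.cast_nonneg (α := ℝ) n]
  have hlt {t : ℝ} (ht : t ∈ Set.Icc ((n : ℝ) + 1) (n + 1 + 2)) : t ^ 2 < R ^ 2 := by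
    nlinarith [hle ht]
  obtain ⟨t, ht, heq⟩ := exists_fwdDiff_fwdDiff_eq (fun t ht ↦ hasDerivAt_arc (hlt ht))
    fun t ht ↦ hasDerivAt_deriv_arc (hlt ht)
  have hcast : Δ_[1] (Δ_[1] fun n : ℕ ↦ √(R ^ 2 - ((n : ℝ) + 1) ^ 2)) n =
      Δ_[1] (Δ_[1] fun t : ℝ ↦ √(R ^ 2 - t ^ 2)) (n + 1) := by
    simp only [fwdDiff]
    push_cast
    rfl
  rw [hcast, heq, neg_neg]
  exact sq_div_arc_pow_three_mem_Icc hR (hle ht)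

lemma integral_arc (hR : 0 < R) :
    ∫ t in (0 : ℝ)..R / √2, √(R ^ 2 - t ^ 2) = R ^ 2 / 4 + π * R ^ 2 / 8 := by
  have hsin : R * sin (π / 4) = R / √2 := by
    rw [Real.sin_pi_div_four, Real.sqrt_div_self', mul_one_div]
  have key := intervalIntegral.integral_comp_mul_deriv (a := 0) (b := π / 4)
    (f := fun θ ↦ R * sin θ) (f' := fun θ ↦ R * cos θ) (g := fun t ↦ √(R ^ 2 - t ^ 2))
    (fun θ _ ↦ (Real.hasDerivAt_sin θ).const_mul R) (by fun_prop) (by fun_prop)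
  rw [Real.sin_zero, mul_zero, hsin] at key
  rw [← key]
  have hcos : Set.EqOn
      (fun θ ↦ ((fun t ↦ √(R ^ 2 - t ^ 2)) ∘ fun θ ↦ R * sin θ) θ * (R * cos θ))
      (fun θ ↦ R ^ 2 * cos θ ^ 2) (Set.uIcc 0 (π / 4)) := by
    intro θ hθ
    rw [Set.uIcc_of_le (by positivity)] at hθ
    have hcos0 : 0 ≤ cos θ :=
      Real.cos_nonneg_of_mem_Icc ⟨by linarith [hθ.1, Real.pi_pos], by linarith [hθ.2, Real.pi_pos]⟩
    have : R ^ 2 - (R * sin θ) ^ 2 = (R * cos θ) ^ 2 := by rw [mul_pow, mul_pow, Real.cos_sq']; ring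
    simp only [Function.comp_apply, this, Real.sqrt_sq (mul_nonneg hR.le hcos0)]
    ring
  rw [intervalIntegral.integral_congr hcos, intervalIntegral.integral_const_mul, integral_cos_sq]
  rw [Real.cos_pi_div_four, Real.sin_pi_div_four, Real.sin_zero]
  nlinarith [Real.sq_sqrt (show (0 : ℝ) ≤ 2 by norm_num)]

lemma abs_sum_sawtooth_arc_le_of_succ {q : ℝ} (hq : 1 ≤ q) {N : ℕ}
    (hN : 2 * ((N : ℝ) + 1) ^ 2 ≤ (q ^ 3) ^ 2) :
    |∑ a ∈ Finset.range N, sawtooth √((q ^ 3) ^ 2 - ((a : ℝ) + 1) ^ 2)| ≤ 161 * q ^ 2 := by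
  have hq0 : 0 < q := one_pos.trans_le hq
  have hNq : (N : ℝ) ≤ q ^ 3 := by
    nlinarith [pow_pos hq0 3, N.cast_nonneg (α := ℝ)]
  have hHle : q ≤ ⌈q⌉₊ := Nat.le_ceil q
  have hHlt : (⌈q⌉₊ : ℝ) ≤ 2 * q := by linarith [Nat.ceil_lt_add_one hq0.le]
  -- The cut-off `H = ⌈q⌉₊` balances the terms of the van der Corput bound.
  have key := abs_sum_sawtooth_le_of_fwdDiff_fwdDiff_mem_Icc
    (v := fun n : ℕ ↦ √((q ^ 3) ^ 2 - ((n : ℝ) + 1) ^ 2)) (N := N) (l := 1 / q ^ 3) (α := 3)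
    (by positivity) (by norm_num)
    (fun n hn ↦ by
      have hn' : (n : ℝ) + 1 + 1 ≤ N := by exact_mod_cast hn
      exact neg_fwdDiff_fwdDiff_arc_mem_Icc (by positivity) (by nlinarith))
    (Nat.ceil_pos.2 hq0)
  have h₁ : 20 * 3 * √(1 / q ^ 3) * N * √(⌈q⌉₊ : ℝ) ≤ 120 * q ^ 2 := by
    have : √(1 / q ^ 3) * √(⌈q⌉₊ : ℝ) ≤ 2 / q := by
      rw [← Real.sqrt_mul (by positivity), Real.sqrt_le_left (by positivity),
        div_mul_eq_mul_div, one_mul, div_pow, div_le_div_iff₀ (by positivity) (by positivity)]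
      nlinarith [pow_pos hq0 2]
    calc 20 * 3 * √(1 / q ^ 3) * N * √(⌈q⌉₊ : ℝ)
        = 60 * N * (√(1 / q ^ 3) * √(⌈q⌉₊ : ℝ)) := by ring
      _ ≤ 60 * q ^ 3 * (2 / q) := by gcongr
      _ = 120 * q ^ 2 := by field_simp; norm_num
  have h₂ : 40 / √(1 / q ^ 3) ≤ 40 * q ^ 2 := by
    rw [Real.sqrt_div zero_le_one, Real.sqrt_one, div_div_eq_mul_div, div_one]
    gcongr
    rw [Real.sqrt_le_left (by positivity), ← pow_mul]
    exact pow_le_pow_right₀ hq (by norm_num)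
  have h₃ : (N : ℝ) / ⌈q⌉₊ ≤ q ^ 2 := by
    rw [div_le_iff₀ (hq0.trans_le hHle)]
    nlinarith
  linarith

lemma abs_sum_sawtooth_arc_le {q : ℝ} (hq : 1 ≤ q) {M : ℕ} (hM : 2 * (M : ℝ) ^ 2 ≤ (q ^ 3) ^ 2) :
    |∑ a ∈ Finset.range M, sawtooth √((q ^ 3) ^ 2 - ((a : ℝ) + 1) ^ 2)| ≤ 162 * q ^ 2 := by
  rcases M with _ | N
  · simp only [Finset.range_zero, Finset.sum_empty, abs_zero]
    positivity
  push_cast at hM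
  rw [Finset.sum_range_succ]
  refine (abs_add_le _ _).trans ?_
  linarith [abs_sum_sawtooth_arc_le_of_succ hq hM, one_le_pow₀ (n := 2) hq,
    abs_sawtooth_le √((q ^ 3) ^ 2 - ((N : ℝ) + 1) ^ 2)]

lemma abs_sum_arc_sub_le (hR : 0 < R) {M : ℕ} (hM : 2 * (M : ℝ) ^ 2 ≤ R ^ 2) :
    |∑ a ∈ Finset.range M, √(R ^ 2 - ((a : ℝ) + 1) ^ 2) -
      ((∫ t in (0 : ℝ)..M, √(R ^ 2 - t ^ 2)) + (√(R ^ 2 - (M : ℝ) ^ 2) - R) / 2)| ≤ 1 := by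
  have hMR : (M : ℝ) ≤ R := by nlinarith [M.cast_nonneg (α := ℝ)]
  have hle {t : ℝ} (ht : t ∈ Set.Icc 0 (M : ℝ)) : 2 * t ^ 2 ≤ R ^ 2 := by
    nlinarith [ht.1, ht.2]
  have hlt {t : ℝ} (ht : t ∈ Set.Icc 0 (M : ℝ)) : t ^ 2 < R ^ 2 := by nlinarith [hle ht]
  have key := abs_sum_sub_integral_le (fun t ht ↦ hasDerivAt_arc (hlt ht))
    (fun t ht ↦ hasDerivAt_deriv_arc (hlt ht)) (ζ := 3 * (1 / R)) fun t ht ↦ by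
      have h := sq_div_arc_pow_three_mem_Icc hR (hle ht)
      rw [abs_neg, abs_of_nonneg ((one_div_pos.2 hR).le.trans h.1)]
      exact h.2
  rw [zero_pow two_ne_zero, sub_zero, Real.sqrt_sq hR.le] at key
  refine key.trans ?_
  rw [mul_one_div, ← mul_div_assoc, div_div, div_le_one (by positivity)]
  linarith

lemma abs_integral_arc_sub_le {m M : ℝ} (hmR : 2 * m ^ 2 = R ^ 2) (hM0 : 0 ≤ M) (hMm : M ≤ m)
    (hmM : m ≤ M + 1) :
    |(∫ t in M..m, √(R ^ 2 - t ^ 2)) - (m - M) * m| ≤ 1 ∧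
      √(R ^ 2 - M ^ 2) ∈ Set.Icc m (m + 1) := by
  have hm0 : 0 ≤ m := hM0.trans hMm
  have hmem : ∀ t ∈ Set.Icc M m, √(R ^ 2 - t ^ 2) ∈ Set.Icc m (m + 1) := fun t ht ↦
    ⟨Real.le_sqrt_of_sq_le (by nlinarith [ht.1, ht.2]),
      Real.sqrt_le_iff.2 ⟨by positivity, by nlinarith [ht.1, ht.2]⟩⟩
  refine ⟨?_, hmem M ⟨le_rfl, hMm⟩⟩
  have hint : IntervalIntegrable (fun t ↦ √(R ^ 2 - t ^ 2)) MeasureTheory.volume M m :=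
    Continuous.intervalIntegrable (by fun_prop) M m
  have hconst : (m - M) * m = ∫ _ in M..m, m := by
    rw [intervalIntegral.integral_const, smul_eq_mul]
  rw [hconst, ← intervalIntegral.integral_sub hint intervalIntegrable_const]
  rw [← Real.norm_eq_abs]
  refine (intervalIntegral.norm_integral_le_of_norm_le_const (C := 1) fun t ht ↦ ?_).trans ?_
  · rw [Set.uIoc_of_le hMm] at ht
    have := hmem t (Set.Ioc_subset_Icc_self ht)
    rw [Real.norm_eq_abs, abs_of_nonneg (sub_nonneg.2 this.1)]
    linarith [this.2]
  · rw [one_mul, abs_of_nonneg (sub_nonneg.2 hMm)]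
    linarith

lemma natCast_floor_eq_sub_sawtooth {t : ℝ} (ht : 0 ≤ t) :
    (⌊t⌋₊ : ℝ) = t - sawtooth t - 1 / 2 := by
  rw [sawtooth, natCast_floor_eq_intCast_floor ht, ← Int.self_sub_fract]
  ring

lemma abs_card_quarterDisc_pow_six_sub_le {q : ℝ} (hq : 1 ≤ q) :
    |((quarterDisc (q ^ 6)).card : ℝ) - π / 4 * q ^ 6| ≤ 400 * q ^ 2 := by
  have hq2 : 1 ≤ q ^ 2 := one_le_pow₀ hq
  rw [show q ^ 6 = (q ^ 3) ^ 2 by ring]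
  set R := q ^ 3
  have hR : 0 < R := by positivity
  set m := R / √2 with hm
  have hm0 : 0 < m := by positivity
  have hmR : 2 * m ^ 2 = R ^ 2 := by
    rw [hm, div_pow, Real.sq_sqrt zero_le_two]
    ring
  set M := ⌊m⌋₊
  have hM0 : (0 : ℝ) ≤ M := Nat.cast_nonneg M
  have hMm : (M : ℝ) ≤ m := Nat.floor_le hm0.le
  have hmM : m < M + 1 := Nat.lt_floor_add_one m
  have hMR : 2 * (M : ℝ) ^ 2 ≤ R ^ 2 := by nlinarith
  have hcard : ((quarterDisc (R ^ 2)).card : ℝ) + M ^ 2 =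
      ⌊R⌋₊ + 2 * ∑ a ∈ Finset.range M, (⌊√(R ^ 2 - ((a : ℝ) + 1) ^ 2)⌋₊ : ℝ) := by
    have := card_quarterDisc_add_sq hMR (by nlinarith)
    rw [Real.sqrt_sq hR.le] at this
    exact_mod_cast this
  simp only [natCast_floor_eq_sub_sawtooth (Real.sqrt_nonneg _), Finset.sum_sub_distrib,
    Finset.sum_const, Finset.card_range, nsmul_eq_mul] at hcard
  have hsaw := abs_sum_sawtooth_arc_le hq hMR
  have htrap := abs_sum_arc_sub_le hR hMR
  obtain ⟨htail, hend⟩ := abs_integral_arc_sub_le hmR hM0 hMm hmM.le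
  have hint := intervalIntegral.integral_add_adjacent_intervals
    (Continuous.intervalIntegrable (μ := MeasureTheory.volume) (u := fun t ↦ √(R ^ 2 - t ^ 2))
      (by fun_prop) 0 M)
    (Continuous.intervalIntegrable (by fun_prop) M m)
  rw [integral_arc hR] at hint
  have hfloor := Nat.floor_le hR.le
  have hfloor' := Nat.lt_floor_add_one R
  have hsq : 0 ≤ (m - M) ^ 2 ∧ (m - M) ^ 2 ≤ 1 := ⟨sq_nonneg _, by nlinarith⟩
  rw [abs_le] at *
  constructor <;> linarith [hend.1, hend.2, hsq.1, hsq.2]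

end Arc

lemma abs_card_quarterDisc_sub_le {x : ℝ} (hx : 1 ≤ x) :
    |((quarterDisc x).card : ℝ) - π / 4 * x| ≤ 400 * x ^ ((1 : ℝ) / 3) := by
  have hx0 : 0 ≤ x := zero_le_one.trans hx
  convert abs_card_quarterDisc_pow_six_sub_le (Real.one_le_rpow hx (z := 1 / 6) (by norm_num))
    using 2
  · rw [← Real.rpow_natCast, ← Real.rpow_mul hx0]
    norm_num
  · rw [← Real.rpow_natCast, ← Real.rpow_mul hx0]
    norm_num

/-! ### Möbius inversion over the ideals of a Dedekind domain -/

section Moebius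

open IsDedekindDomain

variable {R : Type*} [CommRing R] [IsDedekindDomain R] {𝕜 : Type*} [NormedField 𝕜]

/-- The product of a finite set of nonzero primes. These products are exactly the squarefree
ideals, and the value of the Möbius function at `primeProd S` is `(-1) ^ S.card`, so that
`∑ S, (-1) ^ S.card * f (primeProd S)` encodes a sum over ideals weighted by the Möbius function. -/
def primeProd (S : Finset (HeightOneSpectrum R)) : Ideal R := ∏ v ∈ S, v.asIdeal

lemma primeProd_ne_bot (S : Finset (HeightOneSpectrum R)) : primeProd S ≠ ⊥ :=
  Finset.prod_ne_zero_iff.2 fun v _ ↦ v.ne_bot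

lemma primeProd_dvd_iff {S : Finset (HeightOneSpectrum R)} {I : Ideal R} :
    primeProd S ∣ I ↔ ∀ v ∈ S, v.asIdeal ∣ I :=
  ⟨fun h _ hv ↦ (Finset.dvd_prod_of_mem _ hv).trans h,
    Finset.prod_dvd_of_coprime fun v _ w _ hvw ↦ HeightOneSpectrum.isCoprime_of_ne v w hvw⟩

lemma asIdeal_dvd_primeProd_iff {v : HeightOneSpectrum R} {S : Finset (HeightOneSpectrum R)} :
    v.asIdeal ∣ primeProd S ↔ v ∈ S := by
  refine ⟨fun h ↦ ?_, fun h ↦ primeProd_dvd_iff.1 dvd_rfl v h⟩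
  obtain ⟨w, hw, hvw⟩ := v.prime.exists_mem_finset_dvd h
  rwa [HeightOneSpectrum.ext (associated_iff_eq.1 (v.prime.associated_of_dvd w.prime hvw))]

lemma primeProd_injective : Function.Injective (primeProd (R := R)) := fun S T h ↦ by
  ext v
  rw [← asIdeal_dvd_primeProd_iff, h, asIdeal_dvd_primeProd_iff]

lemma exists_asIdeal_dvd {I : Ideal R} (hI : I ≠ ⊥) (hI' : I ≠ ⊤) :
    ∃ v : HeightOneSpectrum R, v.asIdeal ∣ I := by
  obtain ⟨p, hp, hpI⟩ := WfDvdMonoid.exists_irreducible_factor (mt Ideal.isUnit_iff.1 hI') hI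
  exact ⟨HeightOneSpectrum.ofPrime hp.prime, hpI⟩

open Classical in
lemma hasSum_primeProd_dvd {I : Ideal R} (hI : I ≠ ⊥) :
    HasSum (fun S : Finset (HeightOneSpectrum R) ↦
      if primeProd S ∣ I then (-1 : 𝕜) ^ S.card else 0) (if I = ⊤ then 1 else 0) := by
  have hfin := Ideal.finite_factors (R := R) hI
  have hmem (S) : primeProd S ∣ I ↔ S ∈ hfin.toFinset.powerset := by
    simp only [primeProd_dvd_iff, Finset.mem_powerset, Finset.subset_iff, Set.Finite.mem_toFinset,
      Set.mem_ofPred_eq]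
  have hempty : hfin.toFinset = ∅ ↔ I = ⊤ := by
    rw [Set.Finite.toFinset_eq_empty, Set.eq_empty_iff_forall_notMem]
    refine ⟨fun h ↦ ?_, ?_⟩
    · by_contra hI'
      obtain ⟨v, hv⟩ := exists_asIdeal_dvd hI hI'
      exact h v hv
    · rintro rfl v hv
      exact v.prime.not_isUnit (isUnit_of_dvd_one (by rwa [Ideal.one_eq_top]))
  have hsum : ∑ S ∈ hfin.toFinset.powerset, (if primeProd S ∣ I then (-1 : 𝕜) ^ S.card else 0) =
      if I = ⊤ then 1 else 0 := by
    rw [Finset.sum_congr rfl fun S hS ↦ if_pos ((hmem S).2 hS), ← if_congr hempty rfl rfl]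
    exact_mod_cast congrArg (Int.cast (R := 𝕜))
      (Finset.sum_powerset_neg_one_pow_card (x := hfin.toFinset))
  rw [← hsum]
  exact hasSum_sum_of_ne_finset_zero (L := SummationFilter.unconditional _)
    fun S hS ↦ if_neg (mt (hmem S).1 hS)

open Classical in
lemma hasSum_ite_dvd {f : Ideal R →*₀ 𝕜} {z : 𝕜} (hf : HasSum f z) {D : Ideal R} (hD : D ≠ ⊥) :
    HasSum (fun I ↦ if D ∣ I then f I else 0) (f D * z) := by
  rw [← (mul_right_injective₀ hD).hasSum_iff]
  · simpa only [Function.comp_def, dvd_mul_right, if_true, map_mul] using hf.mul_left (f D)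
  · exact fun I hI ↦ if_neg fun ⟨K, hK⟩ ↦ hI ⟨K, hK.symm⟩

section

variable [CompleteSpace 𝕜] {f : Ideal R →*₀ 𝕜}

open Classical in
lemma summable_primeProd_dvd (hf : Summable (‖f ·‖)) :
    Summable fun p : Finset (HeightOneSpectrum R) × Ideal R ↦
      if primeProd p.1 ∣ p.2 then (-1) ^ p.1.card * f p.2 else 0 := by
  have hdvd (S : Finset (HeightOneSpectrum R)) := hasSum_ite_dvd
    (f := (normHom : 𝕜 →*₀ ℝ).comp f) hf.hasSum (primeProd_ne_bot S)
  have hnorm (S : Finset (HeightOneSpectrum R)) (I : Ideal R) :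
      ‖if primeProd S ∣ I then (-1) ^ S.card * f I else 0‖ =
        if primeProd S ∣ I then ‖f I‖ else 0 := by
    split_ifs <;> simp
  refine Summable.of_norm ?_
  simp only [hnorm]
  refine (summable_prod_of_nonneg fun p ↦ by positivity).2 ⟨fun S ↦ (hdvd S).summable, ?_⟩
  refine ((hf.comp_injective primeProd_injective).mul_right (∑' I, ‖f I‖)).congr fun S ↦ ?_
  exact (hdvd S).tsum_eq.symm

lemma hasSum_primeProd_mul_tsum (hf : Summable (‖f ·‖)) :
    HasSum (fun S : Finset (HeightOneSpectrum R) ↦ (-1) ^ S.card * f (primeProd S) * ∑' I, f I)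
      1 := by
  classical
  have hrow (S : Finset (HeightOneSpectrum R)) :
      HasSum (fun I ↦ if primeProd S ∣ I then (-1) ^ S.card * f I else 0)
        ((-1) ^ S.card * f (primeProd S) * ∑' I, f I) := by
    simpa only [mul_ite, mul_zero, mul_assoc] using
      (hasSum_ite_dvd hf.of_norm.hasSum (primeProd_ne_bot S)).mul_left ((-1) ^ S.card)
  have hcol (I : Ideal R) :
      HasSum (fun S : Finset (HeightOneSpectrum R) ↦
        if primeProd S ∣ I then (-1) ^ S.card * f I else 0) (if I = ⊤ then 1 else 0) := by
    rcases eq_or_ne I ⊥ with rfl | hI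
    · have h0 : f (⊥ : Ideal R) = 0 := map_zero f
      simp only [h0, mul_zero, ite_self, bot_ne_top, if_false, hasSum_zero]
    · have hval : (if I = ⊤ then 1 else 0) = (if I = ⊤ then 1 else 0) * f I := by
        split_ifs with h
        · rw [h, ← Ideal.one_eq_top, map_one, one_mul]
        · rw [zero_mul]
      rw [hval]
      simpa only [ite_mul, zero_mul] using (hasSum_primeProd_dvd hI).mul_right (f I)
  have hswap := (summable_primeProd_dvd hf).hasSum
  have hone := (((Equiv.prodComm _ _).hasSum_iff).2 hswap).prod_fiberwise hcol
  rw [hone.unique (hasSum_ite_eq ⊤ 1)] at hswap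
  exact hswap.prod_fiberwise hrow

end

end Moebius

section CoprimePairs

open IsDedekindDomain

variable {R : Type*} [CommRing R] [IsDedekindDomain R] [Module.Free ℤ R]

lemma hasSum_primeProd_div_absNorm_pow {n : ℕ} (hn : n ≠ 0)
    (hsum : Summable fun I : Ideal R ↦ 1 / (Ideal.absNorm I : ℝ) ^ n) :
    HasSum (fun S : Finset (HeightOneSpectrum R) ↦
        (-1) ^ S.card * (1 / (Ideal.absNorm (primeProd S) : ℝ) ^ n))
      (∑' I : Ideal R, 1 / (Ideal.absNorm I : ℝ) ^ n)⁻¹ := by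
  let f : Ideal R →*₀ ℝ := (powMonoidWithZeroHom hn).comp <| invMonoidWithZeroHom.comp <|
    (Nat.castRingHom ℝ).toMonoidWithZeroHom.comp Ideal.absNorm
  have hf (I : Ideal R) : f I = 1 / (Ideal.absNorm I : ℝ) ^ n :=
    (inv_pow _ n).trans (one_div _).symm
  simp only [← hf] at hsum ⊢
  have h := hasSum_primeProd_mul_tsum hsum.norm
  have hne : ∑' I, f I ≠ 0 := by
    intro h0
    simp only [h0, mul_zero] at h
    exact zero_ne_one (hasSum_zero.unique h)
  simpa only [mul_div_cancel_right₀ _ hne, one_div] using h.div_const (∑' I, f I)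

variable [Module.Finite ℤ R]

lemma absNorm_pos {I : Ideal R} (hI : I ≠ ⊥) : 0 < Ideal.absNorm I :=
  Nat.pos_of_ne_zero (mt Ideal.absNorm_eq_zero_iff.1 hI)

variable (R) in
/-- The nonzero ideals of `R` of absolute norm at most `x`. -/
def idealsLE (x : ℝ) : Set (Ideal R) := {I | I ≠ ⊥ ∧ (Ideal.absNorm I : ℝ) ≤ x}

variable (R) in
/-- The pairs of coprime nonzero ideals of `R` of absolute norm at most `x`. -/
def coprimePairs (x : ℝ) : Set (Ideal R × Ideal R) :=
  {p ∈ idealsLE R x ×ˢ idealsLE R x | p.1 ⊔ p.2 = ⊤}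

lemma idealsLE_eq_empty {x : ℝ} (hx : x < 1) : idealsLE R x = ∅ :=
  Set.eq_empty_of_forall_notMem fun _ hI ↦
    (hx.trans_le (Nat.one_le_cast.2 (absNorm_pos hI.1))).not_ge hI.2

lemma mul_mem_idealsLE_iff {x : ℝ} {D I : Ideal R} (hD : D ≠ ⊥) :
    D * I ∈ idealsLE R x ↔ I ∈ idealsLE R (x / Ideal.absNorm D) := by
  have hpos : (0 : ℝ) < Ideal.absNorm D := mod_cast absNorm_pos hD
  simp only [idealsLE, Set.mem_ofPred_eq, ne_eq, Ideal.mul_eq_bot, hD, false_or, map_mul,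
    Nat.cast_mul, le_div_iff₀' hpos]

lemma ncard_idealsLE_dvd (x : ℝ) {D : Ideal R} (hD : D ≠ ⊥) :
    {I ∈ idealsLE R x | D ∣ I}.ncard = (idealsLE R (x / Ideal.absNorm D)).ncard := by
  rw [← Set.ncard_image_of_injective (idealsLE R (x / Ideal.absNorm D)) (mul_right_injective₀ hD)]
  congr 1
  ext I
  constructor
  · rintro ⟨hI, K, rfl⟩
    exact ⟨K, (mul_mem_idealsLE_iff hD).1 hI, rfl⟩
  · rintro ⟨K, hK, rfl⟩
    exact ⟨(mul_mem_idealsLE_iff hD).2 hK, dvd_mul_right D K⟩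

lemma ncard_pairs_absNorm_sup_eq (x : ℝ) {k : ℕ} (hk : k ≠ 0) :
    {p ∈ idealsLE R x ×ˢ idealsLE R x | Ideal.absNorm (p.1 ⊔ p.2) = k}.ncard =
      {D : Ideal R | Ideal.absNorm D = k}.ncard * (coprimePairs R (x / k)).ncard := by
  have hne {D : Ideal R} (hD : Ideal.absNorm D = k) : D ≠ ⊥ := by
    rintro rfl
    exact hk (by rw [← hD, Ideal.absNorm_bot])
  have hsup {D K L : Ideal R} (h : K ⊔ L = ⊤) : D * K ⊔ D * L = D := by
    rw [← Ideal.mul_sup, h, Ideal.mul_top]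
  rw [← Set.ncard_prod]
  refine (Set.BijOn.ncard_eq (f := fun q ↦ (q.1 * q.2.1, q.1 * q.2.2)) ⟨?_, ?_, ?_⟩).symm
  · rintro ⟨D, K, L⟩ ⟨rfl, ⟨hK, hL⟩, h⟩
    exact ⟨⟨(mul_mem_idealsLE_iff (hne rfl)).2 hK, (mul_mem_idealsLE_iff (hne rfl)).2 hL⟩,
      congrArg _ (hsup h)⟩
  · rintro ⟨D, K, L⟩ ⟨hD, -, h⟩ ⟨D', K', L'⟩ ⟨-, -, h'⟩ heq
    obtain ⟨hK, hL⟩ := Prod.mk.inj heq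
    obtain rfl : D = D' := by rw [← hsup (D := D) h, ← hsup (D := D') h', hK, hL]
    exact Prod.ext rfl
      (Prod.ext (mul_left_cancel₀ (hne hD) hK) (mul_left_cancel₀ (hne hD) hL))
  · rintro ⟨I, J⟩ ⟨⟨hI, hJ⟩, rfl⟩
    obtain ⟨K, hK⟩ : I ⊔ J ∣ I := Ideal.dvd_iff_le.2 le_sup_left
    obtain ⟨L, hL⟩ : I ⊔ J ∣ J := Ideal.dvd_iff_le.2 le_sup_right
    have hD := hne (D := I ⊔ J) rfl
    refine ⟨(I ⊔ J, K, L), ⟨rfl, ⟨?_, ?_⟩, mul_left_cancel₀ hD ?_⟩, Prod.ext hK.symm hL.symm⟩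
    · exact (mul_mem_idealsLE_iff hD).1 (hK ▸ hI)
    · exact (mul_mem_idealsLE_iff hD).1 (hL ▸ hJ)
    · rw [Ideal.mul_sup, ← hK, ← hL, Ideal.mul_top]

variable [CharZero R]

lemma finite_idealsLE (x : ℝ) : (idealsLE R x).Finite :=
  (Ideal.finite_setOfPred_absNorm_le ⌊x⌋₊).subset fun _ hI ↦ Nat.le_floor hI.2

lemma one_le_ncard_idealsLE {x : ℝ} (hx : 1 ≤ x) : 1 ≤ (idealsLE R x).ncard :=
  (Set.ncard_pos (finite_idealsLE x)).2 ⟨⊤, top_ne_bot, by simpa⟩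

lemma hasSum_ncard_coprimePairs (x : ℝ) :
    HasSum (fun S : Finset (HeightOneSpectrum R) ↦
        (-1) ^ S.card * ((idealsLE R (x / Ideal.absNorm (primeProd S))).ncard : ℝ) ^ 2)
      ((coprimePairs R x).ncard : ℝ) := by
  classical
  have hfin := (finite_idealsLE (R := R) x).prod (finite_idealsLE (R := R) x)
  have h := hasSum_sum (s := hfin.toFinset) fun p hp ↦
    hasSum_primeProd_dvd (𝕜 := ℝ) (I := p.1 ⊔ p.2) fun h ↦
      (hfin.mem_toFinset.1 hp).1.1 (sup_eq_bot_iff.1 h).1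
  simp only [← Finset.sum_filter, Finset.sum_const, nsmul_eq_mul, mul_one,
    ← Set.ncard_coe_finset, Finset.coe_filter, hfin.mem_toFinset] at h
  refine h.congr_fun fun S ↦ ?_
  rw [Set.ncard_coe_finset S, ← ncard_idealsLE_dvd x (primeProd_ne_bot S), mul_comm,
    ← Nat.cast_pow, sq, ← Set.ncard_prod]
  congr 3
  ext p
  simp only [Ideal.dvd_iff_le, sup_le_iff, Set.mem_prod, Set.mem_ofPred_eq]
  tauto

lemma abs_ncard_coprimePairs_sub_le {κ C β x : ℝ}
    (hA : ∀ t > 0, |((idealsLE R t).ncard : ℝ) ^ 2 - κ * t ^ 2| ≤ C * t ^ β)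
    (hsq : Summable fun I : Ideal R ↦ 1 / (Ideal.absNorm I : ℝ) ^ 2)
    (hβ : Summable fun I : Ideal R ↦ (Ideal.absNorm I : ℝ) ^ (-β)) (hx : 0 < x) :
    |((coprimePairs R x).ncard : ℝ) - κ * x ^ 2 / ∑' I : Ideal R, 1 / (Ideal.absNorm I : ℝ) ^ 2| ≤
      C * (∑' S : Finset (HeightOneSpectrum R), (Ideal.absNorm (primeProd S) : ℝ) ^ (-β)) *
        x ^ β := by
  have hmain := (hasSum_ncard_coprimePairs (R := R) x).sub
    ((hasSum_primeProd_div_absNorm_pow two_ne_zero hsq).mul_left (κ * x ^ 2))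
  have herror := (hβ.comp_injective primeProd_injective).hasSum.mul_left (C * x ^ β)
  rw [mul_right_comm, div_eq_mul_inv]
  refine hmain.norm_le_of_bounded herror fun S ↦ ?_
  have hN : (0 : ℝ) < Ideal.absNorm (primeProd S) := mod_cast absNorm_pos (primeProd_ne_bot S)
  set N : ℝ := (Ideal.absNorm (primeProd S) : ℝ)
  calc ‖(-1) ^ S.card * ((idealsLE R (x / N)).ncard : ℝ) ^ 2 -
          κ * x ^ 2 * ((-1) ^ S.card * (1 / N ^ 2))‖
      = ‖(-1) ^ S.card * (((idealsLE R (x / N)).ncard : ℝ) ^ 2 - κ * (x / N) ^ 2)‖ := by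
        congr 1
        ring
    _ = |((idealsLE R (x / N)).ncard : ℝ) ^ 2 - κ * (x / N) ^ 2| := by
        rw [norm_mul, norm_pow, norm_neg, norm_one, one_pow, one_mul, Real.norm_eq_abs]
    _ ≤ C * (x / N) ^ β := hA _ (by positivity)
    _ = C * x ^ β * N ^ (-β) := by
        rw [Real.div_rpow hx.le hN.le, Real.rpow_neg hN.le]
        ring

end CoprimePairs

/-! ### Ideals of the Gaussian integers -/

section Zsqrtd

variable (d : ℤ)

/-- The coordinates of `ℤ[√d]` with respect to the basis `1, √d`. -/
def zsqrtdEquivFun : Zsqrtd d ≃ₗ[ℤ] (Fin 2 → ℤ) where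
  toFun z := ![z.re, z.im]
  invFun v := ⟨v 0, v 1⟩
  map_add' _ _ := by simp
  map_smul' _ _ := by simp
  left_inv _ := rfl
  right_inv v := by ext i; fin_cases i <;> rfl

/-- The basis `1, √d` of `ℤ[√d]`. -/
noncomputable def zsqrtdBasis : Module.Basis (Fin 2) ℤ (Zsqrtd d) := .ofEquivFun (zsqrtdEquivFun d)

instance : Module.Free ℤ (Zsqrtd d) := .of_basis (zsqrtdBasis d)

instance : Module.Finite ℤ (Zsqrtd d) := .of_basis (zsqrtdBasis d)

variable {d}

lemma zsqrtdBasis_repr_apply (z : Zsqrtd d) (i : Fin 2) :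
    (zsqrtdBasis d).repr z i = ![z.re, z.im] i :=
  rfl

lemma coe_zsqrtdBasis : ⇑(zsqrtdBasis d) = ![1, Zsqrtd.sqrtd] :=
  (Module.Basis.coe_ofEquivFun _).trans <| by
    ext i <;> fin_cases i <;> rfl

lemma algebraNorm_zsqrtd (z : Zsqrtd d) : Algebra.norm ℤ z = z.norm := by
  rw [Algebra.norm_eq_matrix_det (zsqrtdBasis d), Matrix.det_fin_two, Zsqrtd.norm_def]
  simp [Algebra.leftMulMatrix_eq_repr_mul, zsqrtdBasis_repr_apply, coe_zsqrtdBasis]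

end Zsqrtd

section PrincipalIdealDomain

variable {R : Type*} [CommRing R] [IsDomain R] [IsPrincipalIdealRing R]

open Submodule.IsPrincipal in
lemma ncard_setOf_span_singleton_mem {s : Set (Ideal R)} (hs : ⊥ ∉ s) :
    {z : R | Ideal.span {z} ∈ s}.ncard = Nat.card Rˣ * s.ncard := by
  have hgen (I : Ideal R) : Ideal.span {generator I} = I := Ideal.span_singleton_generator I
  have hspan (u : Rˣ) (I : Ideal R) : Ideal.span {generator I * (u : R)} = I := by
    rw [Ideal.span_singleton_mul_right_unit u.isUnit, hgen]
  rw [← Set.ncard_univ, ← Set.ncard_prod]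
  refine (Set.BijOn.ncard_eq (f := fun q : Rˣ × Ideal R ↦ generator q.2 * q.1) ⟨?_, ?_, ?_⟩).symm
  · rintro ⟨u, I⟩ ⟨-, hI⟩
    rwa [Set.mem_ofPred_eq, hspan]
  · rintro ⟨u, I⟩ ⟨-, hI⟩ ⟨v, J⟩ - h
    have hIJ : I = J := 
      (hspan u I).symm.trans ((congrArg (fun z ↦ Ideal.span {z}) h).trans (hspan v J))
    subst hIJ
    have hne : generator I ≠ 0 := fun h0 ↦
      hs (by rwa [(eq_bot_iff_generator_eq_zero I).2 h0] at hI)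
    exact Prod.ext (Units.ext (mul_left_cancel₀ hne h)) rfl
  · intro z hz
    obtain ⟨u, hu⟩ := Ideal.span_singleton_eq_span_singleton.1 (hgen (Ideal.span {z}))
    exact ⟨(u, Ideal.span {z}), ⟨trivial, hz⟩, hu⟩

end PrincipalIdealDomain

section GaussianIdeals

lemma normI_eq_absNorm (I : Ideal GaussianInt) : normI I = Ideal.absNorm I := by
  rw [Ideal.absNorm_apply, Submodule.cardQuot_apply]
  rfl

lemma absNorm_span_gaussianInt (z : GaussianInt) :
    (Ideal.absNorm (Ideal.span {z}) : ℤ) = z.re ^ 2 + z.im ^ 2 := by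
  rw [Ideal.absNorm_span_singleton, algebraNorm_zsqrtd, Int.natCast_natAbs,
    abs_of_nonneg (GaussianInt.norm_nonneg z), Zsqrtd.norm_def]
  ring

lemma isUnit_gaussianInt_iff {z : GaussianInt} :
    IsUnit z ↔ z = ⟨1, 0⟩ ∨ z = ⟨-1, 0⟩ ∨ z = ⟨0, 1⟩ ∨ z = ⟨0, -1⟩ := by
  rw [← Zsqrtd.norm_eq_one_iff' (by norm_num), Zsqrtd.norm_def]
  constructor
  · intro h
    simp only [Zsqrtd.ext_iff]
    have hre : z.re ^ 2 ≤ 1 := by nlinarith [sq_nonneg z.im]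
    have him : z.im ^ 2 ≤ 1 := by nlinarith [sq_nonneg z.re]
    obtain ⟨hre₁, hre₂⟩ := abs_le.1 (sq_le_one_iff_abs_le_one z.re |>.1 hre)
    obtain ⟨him₁, him₂⟩ := abs_le.1 (sq_le_one_iff_abs_le_one z.im |>.1 him)
    generalize z.re = a at *
    generalize z.im = b at *
    interval_cases a <;> interval_cases b <;> simp_all
  · rintro (rfl | rfl | rfl | rfl) <;> norm_num

lemma card_units_gaussianInt : Nat.card GaussianIntˣ = 4 := by
  have hset : {z : GaussianInt | IsUnit z} = {⟨1, 0⟩, ⟨-1, 0⟩, ⟨0, 1⟩, ⟨0, -1⟩} := by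
    ext z
    exact isUnit_gaussianInt_iff
  have hrange : Set.range (Units.val : GaussianIntˣ → GaussianInt) = {z | IsUnit z} := rfl
  rw [← Set.ncard_univ, ← Set.ncard_image_of_injective _ Units.val_injective, Set.image_univ,
    hrange, hset]
  rw [Set.ncard_eq_toFinset_card']
  rfl

lemma r_eq_four_mul_ncard {k : ℕ} (hk : k ≠ 0) :
    r k = 4 * {I : Ideal GaussianInt | Ideal.absNorm I = k}.ncard := by
  have hbot : (⊥ : Ideal GaussianInt) ∉ {I | Ideal.absNorm I = k} := by
    simpa using hk.symm
  rw [← card_units_gaussianInt, ← ncard_setOf_span_singleton_mem hbot, r]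
  refine (Set.BijOn.ncard_eq (f := fun z ↦ (z.re, z.im)) ⟨?_, ?_, ?_⟩).symm
  · intro z hz
    exact (absNorm_span_gaussianInt z).symm.trans (congrArg _ hz)
  · intro z _ w _ h
    exact Zsqrtd.ext (congrArg Prod.fst h) (congrArg Prod.snd h)
  · rintro ⟨a, b⟩ hab
    exact ⟨⟨a, b⟩, Int.ofNat_inj.1 ((absNorm_span_gaussianInt _).trans hab), rfl⟩

/-- The ideal of `ℤ[i]` generated by `a + b i`. On the `(a, b)` with `0 < a` it enumerates the
nonzero ideals without repetition, since multiplication by `i` rotates the plane by a right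
angle. -/
def quadrantIdeal (p : ℕ × ℕ) : Ideal GaussianInt := Ideal.span {⟨p.1, p.2⟩}

lemma absNorm_quadrantIdeal (p : ℕ × ℕ) :
    Ideal.absNorm (quadrantIdeal p) = p.1 ^ 2 + p.2 ^ 2 := by
  zify
  exact absNorm_span_gaussianInt _

lemma injOn_quadrantIdeal : Set.InjOn quadrantIdeal {p | 0 < p.1} := by
  rintro ⟨a, b⟩ ha ⟨c, d⟩ hc h
  obtain ⟨u, hu⟩ := Ideal.span_singleton_eq_span_singleton.1 h
  simp only [Set.mem_ofPred_eq] at ha hc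
  rcases isUnit_gaussianInt_iff.1 u.isUnit with hu' | hu' | hu' | hu' <;>
    simp only [hu', Zsqrtd.ext_iff, Zsqrtd.re_mul, Zsqrtd.im_mul] at hu <;>
    ext <;> dsimp only <;> omega

lemma exists_quadrantIdeal_eq {I : Ideal GaussianInt} (hI : I ≠ ⊥) :
    ∃ p : ℕ × ℕ, 0 < p.1 ∧ quadrantIdeal p = I := by
  obtain ⟨⟨a, b⟩, rfl⟩ := (IsPrincipalIdealRing.principal I).principal
  have hne : a ≠ 0 ∨ b ≠ 0 := by
    by_contra! h
    exact hI (by rw [h.1, h.2]; exact Ideal.span_singleton_eq_bot.2 rfl)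
  obtain ⟨c, e, u, hc, hu, hab⟩ : ∃ (c e : ℕ) (u : GaussianInt), 0 < c ∧ IsUnit u ∧
      (⟨c, e⟩ : GaussianInt) * u = ⟨a, b⟩ := by
    have hquadrant : 0 < a ∧ 0 ≤ b ∨ 0 < b ∧ a ≤ 0 ∨ a < 0 ∧ b ≤ 0 ∨ b < 0 ∧ 0 ≤ a := by omega
    rcases hquadrant with h | h | h | h
    · exact ⟨a.toNat, b.toNat, ⟨1, 0⟩, by omega, by simp [isUnit_gaussianInt_iff],
        by ext <;> simp <;> omega⟩
    · exact ⟨b.toNat, (-a).toNat, ⟨0, 1⟩, by omega, by simp [isUnit_gaussianInt_iff],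
        by ext <;> simp <;> omega⟩
    · exact ⟨(-a).toNat, (-b).toNat, ⟨-1, 0⟩, by omega, by simp [isUnit_gaussianInt_iff],
        by ext <;> simp <;> omega⟩
    · exact ⟨(-b).toNat, a.toNat, ⟨0, -1⟩, by omega, by simp [isUnit_gaussianInt_iff],
        by ext <;> simp <;> omega⟩
  exact ⟨(c, e), hc, Ideal.span_singleton_eq_span_singleton.2 ⟨hu.unit, hab⟩⟩

lemma ncard_idealsLE_eq_card_quarterDisc (x : ℝ) :
    (idealsLE GaussianInt x).ncard = (quarterDisc x).card := by
  have hnorm (p : ℕ × ℕ) :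
      (Ideal.absNorm (quadrantIdeal p) : ℝ) = (p.1 : ℝ) ^ 2 + (p.2 : ℝ) ^ 2 := by
    exact_mod_cast absNorm_quadrantIdeal p
  rw [← Set.ncard_coe_finset]
  refine (Set.BijOn.ncard_eq (f := quadrantIdeal) ⟨?_, ?_, ?_⟩).symm
  · intro p hp
    obtain ⟨hp, hpx⟩ := mem_quarterDisc.1 hp
    refine ⟨fun h ↦ ?_, (hnorm p).trans_le hpx⟩
    have hzero := absNorm_quadrantIdeal p
    rw [h, Ideal.absNorm_bot] at hzero
    exact (by positivity : 0 < p.1 ^ 2 + p.2 ^ 2).ne hzero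
  · exact injOn_quadrantIdeal.mono fun p hp ↦ (mem_quarterDisc.1 hp).1
  · rintro I ⟨hI, hIx⟩
    obtain ⟨p, hp, rfl⟩ := exists_quadrantIdeal_eq hI
    exact ⟨p, mem_quarterDisc.2 ⟨hp, (hnorm p).symm.trans_le hIx⟩, rfl⟩

lemma summable_absNorm_rpow_neg {s : ℝ} (hs : 1 < s) :
    Summable fun I : Ideal GaussianInt ↦ (Ideal.absNorm I : ℝ) ^ (-s) := by
  let g (I : Ideal GaussianInt) : GaussianInt := Submodule.IsPrincipal.generator I
  have hspan (I : Ideal GaussianInt) : Ideal.span {g I} = I := Ideal.span_singleton_generator I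
  let v (I : Ideal GaussianInt) : Fin 2 → ℤ := ![(g I).re, (g I).im]
  have hv : Function.Injective v := fun I J h ↦ by
    rw [← hspan I, ← hspan J, Zsqrtd.ext (congrFun h 0) (congrFun h 1)]
  refine .of_nonneg_of_le (fun I ↦ by positivity) (fun I ↦ ?_)
    ((EisensteinSeries.summable_one_div_norm_rpow (k := 2 * s) (by linarith)).comp_injective hv)
  rcases eq_or_ne I ⊥ with rfl | hI
  · rw [Ideal.absNorm_bot, Nat.cast_zero, Real.zero_rpow (by linarith)]
    exact Real.rpow_nonneg (norm_nonneg _) _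
  have hnorm : (Ideal.absNorm I : ℝ) = ((g I).re : ℝ) ^ 2 + ((g I).im : ℝ) ^ 2 := by
    have := absNorm_span_gaussianInt (g I)
    rw [hspan] at this
    exact_mod_cast this
  have hpos : 0 < ‖v I‖ := norm_pos_iff.2 fun h ↦ hI <| by
    rw [← hspan I, Ideal.span_singleton_eq_bot]
    exact Zsqrtd.ext (congrFun h 0) (congrFun h 1)
  have hle : ‖v I‖ ^ 2 ≤ Ideal.absNorm I := by
    rw [← Real.le_sqrt (norm_nonneg _) (Nat.cast_nonneg _), hnorm,
      pi_norm_le_iff_of_nonneg (Real.sqrt_nonneg _), Fin.forall_fin_two]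
    exact ⟨Real.abs_le_sqrt (le_add_of_nonneg_right (sq_nonneg _)),
      Real.abs_le_sqrt (le_add_of_nonneg_left (sq_nonneg _))⟩
  calc (Ideal.absNorm I : ℝ) ^ (-s) ≤ (‖v I‖ ^ 2) ^ (-s) :=
        Real.rpow_le_rpow_of_nonpos (by positivity) hle (by linarith)
    _ = ‖v I‖ ^ (-(2 * s)) := by
        rw [← Real.rpow_natCast, ← Real.rpow_mul hpos.le]
        norm_num

lemma zetaQi2_eq_tsum : zetaQi2 = ∑' I : Ideal GaussianInt, 1 / (Ideal.absNorm I : ℝ) ^ 2 := by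
  simp only [zetaQi2, normI_eq_absNorm]
  refine tsum_subtype_eq_of_support_subset
    (f := fun I : Ideal GaussianInt ↦ 1 / (Ideal.absNorm I : ℝ) ^ 2) fun I hI hbot ↦ hI ?_
  simp [hbot]

lemma P_eq_prod (x : ℝ) : P x = idealsLE GaussianInt x ×ˢ idealsLE GaussianInt x := by
  ext p
  simp only [P, idealsLE, normI_eq_absNorm, Set.mem_ofPred_eq, Set.mem_prod]
  tauto

end GaussianIdeals

/-! ### The distribution of the norm of the greatest common divisor -/

section PowerSaving

open Filter

variable {f : ℝ → ℝ} {κ C θ : ℝ}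

lemma abs_sq_sub_sq_le_of_abs_sub_le (hf₀ : ∀ t < 1, f t = 0)
    (hf : ∀ t ≥ 1, |f t - κ * t| ≤ C * t ^ θ) (hκ : 0 ≤ κ) (hθ : θ ≤ 1) {t : ℝ} (ht : 0 < t) :
    |f t ^ 2 - κ ^ 2 * t ^ 2| ≤ (κ ^ 2 + C * (C + 2 * κ)) * t ^ (1 + θ) := by
  have hC : 0 ≤ C := by simpa using (abs_nonneg _).trans (hf 1 le_rfl)
  rcases lt_or_ge t 1 with ht₁ | ht₁
  · have hsq : t ^ 2 ≤ t ^ (1 + θ) := by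
      rw [← Real.rpow_two]
      exact Real.rpow_le_rpow_of_exponent_ge ht ht₁.le (by linarith)
    rw [hf₀ t ht₁, zero_pow two_ne_zero, zero_sub, abs_neg, abs_of_nonneg (by positivity)]
    calc κ ^ 2 * t ^ 2 ≤ κ ^ 2 * t ^ (1 + θ) := by gcongr
      _ ≤ (κ ^ 2 + C * (C + 2 * κ)) * t ^ (1 + θ) := by
        gcongr
        exact le_add_of_nonneg_right (by positivity)
  · have hθt : t ^ θ ≤ t := by
      simpa using Real.rpow_le_rpow_of_exponent_le ht₁ hθ
    have hadd : |f t + κ * t| ≤ (C + 2 * κ) * t := by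
      calc |f t + κ * t| = |(f t - κ * t) + 2 * κ * t| := by ring_nf
        _ ≤ C * t + 2 * κ * t := by
          refine (abs_add_le _ _).trans (add_le_add ((hf t ht₁).trans (by gcongr)) ?_)
          rw [abs_of_nonneg (by positivity)]
        _ = (C + 2 * κ) * t := by ring
    calc |f t ^ 2 - κ ^ 2 * t ^ 2| = |f t - κ * t| * |f t + κ * t| := by
          rw [← abs_mul]
          ring_nf
      _ ≤ (C * t ^ θ) * ((C + 2 * κ) * t) := by gcongr; exact hf t ht₁
      _ = C * (C + 2 * κ) * t ^ (1 + θ) := by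
          rw [Real.rpow_add ht, Real.rpow_one]
          ring
      _ ≤ (κ ^ 2 + C * (C + 2 * κ)) * t ^ (1 + θ) := by
          gcongr
          exact le_add_of_nonneg_left (by positivity)

lemma exists_mul_le_of_abs_sub_le (hf₁ : ∀ t ≥ 1, 1 ≤ f t)
    (hf : ∀ t ≥ 1, |f t - κ * t| ≤ C * t ^ θ) (hκ : 0 < κ) (hθ : θ < 1) :
    ∃ c > 0, ∀ t ≥ 1, c * t ≤ f t := by
  have hsmall : ∀ᶠ t : ℝ in atTop, C * t ^ θ ≤ κ / 2 * t := by
    have hdecay : ∀ᶠ t : ℝ in atTop, C * t ^ (-(1 - θ)) < κ / 2 :=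
      ((tendsto_rpow_neg_atTop (sub_pos.2 hθ)).const_mul C).eventually_lt_const (by simpa using hκ)
    filter_upwards [hdecay, eventually_gt_atTop 0] with t ht ht₀
    calc C * t ^ θ = C * t ^ (-(1 - θ)) * t := by
          rw [mul_assoc, ← Real.rpow_add_one ht₀.ne', neg_sub, sub_add_cancel]
      _ ≤ κ / 2 * t := by gcongr
  obtain ⟨T, hT⟩ := eventually_atTop.1 hsmall
  have hmax : 0 < max T 1 := lt_max_of_lt_right one_pos
  refine ⟨min (1 / max T 1) (κ / 2), by positivity, fun t ht ↦ ?_⟩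
  rcases le_total t (max T 1) with htT | htT
  · calc min (1 / max T 1) (κ / 2) * t ≤ 1 / max T 1 * max T 1 := by
          gcongr
          exact min_le_left _ _
      _ = 1 := one_div_mul_cancel hmax.ne'
      _ ≤ f t := hf₁ t ht
  · calc min (1 / max T 1) (κ / 2) * t ≤ κ / 2 * t := by
          gcongr
          exact min_le_right _ _
      _ ≤ f t := by
          linarith [hT t ((le_max_left _ _).trans htT), (abs_le.1 (hf t ht)).1]

end PowerSaving

lemma abs_div_sub_one_div_le {κ z c C₁ C₂ β A B x y : ℝ} (hx : 0 < x) (hy : 1 ≤ y) (hz : 0 < z)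
    (hc : 0 < c) (hC₁ : 0 ≤ C₁) (hβ : β ≤ 2) (hcA : c * x ^ 2 ≤ A)
    (hA : |A - κ * x ^ 2| ≤ C₁ * x ^ β)
    (hB : |B - κ * (x / y) ^ 2 / z| ≤ C₂ * (x / y) ^ β) :
    |B / A - 1 / (z * y ^ 2)| ≤ (C₂ + C₁ / z) / c / (x ^ (2 - β) * y ^ β) := by
  have hy₀ : 0 < y := one_pos.trans_le hy
  have hA₀ : 0 < A := lt_of_lt_of_le (by positivity) hcA
  have hyβ : y ^ β ≤ y ^ 2 := by
    rw [← Real.rpow_two]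
    exact Real.rpow_le_rpow_of_exponent_le hy hβ
  have hdecomp : B / A - 1 / (z * y ^ 2) =
      ((B - κ * (x / y) ^ 2 / z) - (A - κ * x ^ 2) / (z * y ^ 2)) / A := by
    field_simp
    ring
  have hAz : |(A - κ * x ^ 2) / (z * y ^ 2)| ≤ C₁ / z * (x / y) ^ β := by
    rw [abs_div, abs_of_pos (by positivity : 0 < z * y ^ 2), Real.div_rpow hx.le hy₀.le]
    calc |A - κ * x ^ 2| / (z * y ^ 2) ≤ C₁ * x ^ β / (z * y ^ β) := by gcongr
      _ = C₁ / z * (x ^ β / y ^ β) := by ring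
  have hnum : |(B - κ * (x / y) ^ 2 / z) - (A - κ * x ^ 2) / (z * y ^ 2)| ≤
      (C₂ + C₁ / z) * (x / y) ^ β :=
    (abs_sub _ _).trans ((add_le_add hB hAz).trans_eq (add_mul _ _ _).symm)
  rw [hdecomp, abs_div, abs_of_pos hA₀]
  calc _ ≤ (C₂ + C₁ / z) * (x / y) ^ β / (c * x ^ 2) :=
        div_le_div₀ ((abs_nonneg _).trans hnum) hnum (by positivity) hcA
    _ = (C₂ + C₁ / z) / c / (x ^ (2 - β) * y ^ β) := by
        rw [Real.div_rpow hx.le hy₀.le, Real.rpow_sub hx, Real.rpow_two]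
        field_simp

section

variable {R : Type*} [CommRing R] [IsDedekindDomain R] [Module.Free ℤ R] [Module.Finite ℤ R]

lemma summable_one_div_absNorm_sq {s : ℝ} (hs : s ≤ 2)
    (h : Summable fun I : Ideal R ↦ (Ideal.absNorm I : ℝ) ^ (-s)) :
    Summable fun I : Ideal R ↦ 1 / (Ideal.absNorm I : ℝ) ^ 2 := by
  refine .of_nonneg_of_le (fun I ↦ by positivity) (fun I ↦ ?_) h
  rcases eq_or_ne I ⊥ with rfl | hI
  · rw [Ideal.absNorm_bot, Nat.cast_zero, zero_pow two_ne_zero, div_zero]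
    positivity
  · rw [one_div, ← Real.rpow_two, ← Real.rpow_neg (Nat.cast_nonneg _)]
    exact Real.rpow_le_rpow_of_exponent_le (Nat.one_le_cast.2 (absNorm_pos hI)) (by linarith)

variable [CharZero R] in
lemma exists_abs_gcd_ratio_sub_le {κ C θ : ℝ} (hκ : 0 < κ) (hθ : θ < 1)
    (hcount : ∀ x ≥ 1, |((idealsLE R x).ncard : ℝ) - κ * x| ≤ C * x ^ θ)
    (hsum : Summable fun I : Ideal R ↦ (Ideal.absNorm I : ℝ) ^ (-(1 + θ))) :
    ∃ K > 0, ∀ x ≥ (1 : ℝ), ∀ k : ℕ, 1 ≤ k →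
      |({p ∈ idealsLE R x ×ˢ idealsLE R x | Ideal.absNorm (p.1 ⊔ p.2) = k}.ncard : ℝ) /
            ((idealsLE R x ×ˢ idealsLE R x).ncard : ℝ) -
          {D : Ideal R | Ideal.absNorm D = k}.ncard /
            ((∑' I : Ideal R, 1 / (Ideal.absNorm I : ℝ) ^ 2) * (k : ℝ) ^ 2)| ≤
        K * {D : Ideal R | Ideal.absNorm D = k}.ncard / (x ^ (1 - θ) * (k : ℝ) ^ (1 + θ)) := by
  have hsq := summable_one_div_absNorm_sq (by linarith) hsum
  have hsquare (t : ℝ) (ht : 0 < t) := abs_sq_sub_sq_le_of_abs_sub_le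
    (fun t ht ↦ by rw [idealsLE_eq_empty ht, Set.ncard_empty, Nat.cast_zero]) hcount hκ.le hθ.le ht
  obtain ⟨c, hc, hlower⟩ := exists_mul_le_of_abs_sub_le
    (fun t ht ↦ Nat.one_le_cast.2 (one_le_ncard_idealsLE (R := R) ht)) hcount hκ hθ
  have hC : 0 ≤ C := by simpa using (abs_nonneg _).trans (hcount 1 le_rfl)
  set Z := ∑' I : Ideal R, 1 / (Ideal.absNorm I : ℝ) ^ 2
  have hZ : 0 < Z := hsq.tsum_pos (fun I ↦ by positivity) ⊤ (by simp)
  set C₁ := κ ^ 2 + C * (C + 2 * κ)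
  set C₂ := C₁ * ∑' S, (Ideal.absNorm (primeProd (R := R) S) : ℝ) ^ (-(1 + θ))
  have hC₁ : 0 < C₁ := by positivity
  have hC₂ : 0 ≤ C₂ := mul_nonneg hC₁.le (tsum_nonneg fun S ↦ by positivity)
  refine ⟨(C₂ + C₁ / Z) / c ^ 2,
    div_pos (add_pos_of_nonneg_of_pos hC₂ (div_pos hC₁ hZ)) (pow_pos hc 2), fun x hx k hk ↦ ?_⟩
  have hx₀ : 0 < x := one_pos.trans_le hx
  have hk₀ : (0 : ℝ) < k := Nat.cast_pos.2 hk
  have hratio := abs_div_sub_one_div_le hx₀ (Nat.one_le_cast.2 hk) hZ (pow_pos hc 2) hC₁.le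
    (by linarith) (by rw [← mul_pow]; exact pow_le_pow_left₀ (by positivity) (hlower x hx) 2)
    (hsquare x hx₀) (abs_ncard_coprimePairs_sub_le hsquare hsq hsum (div_pos hx₀ hk₀))
  rw [show 2 - (1 + θ) = 1 - θ by ring] at hratio
  rw [ncard_pairs_absNorm_sup_eq x (Nat.pos_iff_ne_zero.1 hk), Set.ncard_prod, ← sq]
  push_cast
  set n : ℝ := ({D : Ideal R | Ideal.absNorm D = k}.ncard : ℝ)
  have hn₀ : 0 ≤ n := Nat.cast_nonneg _
  calc _ = |n * (((coprimePairs R (x / k)).ncard : ℝ) / ((idealsLE R x).ncard : ℝ) ^ 2 -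
          1 / (Z * (k : ℝ) ^ 2))| := by ring_nf
    _ ≤ n * ((C₂ + C₁ / Z) / c ^ 2 / (x ^ (1 - θ) * (k : ℝ) ^ (1 + θ))) := by
        rw [abs_mul, abs_of_nonneg hn₀]
        gcongr
    _ = _ := by ring

end

theorem gcdNormProbability_asymptotic_general :
    ∃ C : ℝ, 0 < C ∧ ∀ x : ℝ, 1 ≤ x → ∀ k : ℕ, 1 ≤ k →
      |({p ∈ P x | normI (p.1 ⊔ p.2) = k}.ncard : ℝ) / ((P x).ncard : ℝ) -
          (r k : ℝ) / (4 * zetaQi2 * (k : ℝ) ^ 2)|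
        ≤ C * (r k : ℝ) / (x ^ ((2 : ℝ) / 3) * (k : ℝ) ^ ((4 : ℝ) / 3)) := by
  obtain ⟨C, hC, h⟩ := exists_abs_gcd_ratio_sub_le (R := GaussianInt) (κ := π / 4) (θ := 1 / 3)
    (by positivity) (by norm_num)
    (fun x hx ↦ ncard_idealsLE_eq_card_quarterDisc x ▸ abs_card_quarterDisc_sub_le hx)
    (summable_absNorm_rpow_neg (by norm_num))
  refine ⟨C / 4, by positivity, fun x hx k hk ↦ ?_⟩
  convert h x hx k hk using 2
  · simp only [P_eq_prod, normI_eq_absNorm, zetaQi2_eq_tsum,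
      r_eq_four_mul_ncard (Nat.pos_iff_ne_zero.1 hk), Nat.cast_mul, Nat.cast_ofNat, mul_assoc,
      mul_div_mul_left _ _ (four_ne_zero' ℝ)]
  · rw [r_eq_four_mul_ncard (Nat.pos_iff_ne_zero.1 hk)]
    push_cast
    ring
  · norm_num

theorem gcdNormProbability_asymptotic :
    ∃ C : ℝ, 0 < C ∧ ∀ x : ℝ, 1 ≤ x → ∀ k : ℕ, 1 ≤ k → (k : ℝ) ≤ x →
      |({p ∈ P x | normI (p.1 ⊔ p.2) = k}.ncard : ℝ) / ((P x).ncard : ℝ) -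
          (r k : ℝ) / (4 * zetaQi2 * (k : ℝ) ^ 2)|
        ≤ C * (r k : ℝ) / (x ^ ((2 : ℝ) / 3) * (k : ℝ) ^ ((4 : ℝ) / 3)) := by
  obtain ⟨C, hC, h⟩ := gcdNormProbability_asymptotic_general
  exact ⟨C, hC, fun x hx k hk _ ↦ h x hx k hk⟩
end

section
/- For every natural number n > 2 there exists a real constant c_n such that, as x → ∞, the quantity [(∑ over pairs (I, J) ∈ P(x) of N(I ⊔ J)^n) / (number of pairs in P(x))] / x^(n−1) converges to c_n; that is, the n-th moment of the norm of the greatest common divisor of two nonzero ideals of ℤ[i] chosen uniformly and independently from those of norm at most x is asymptotic to c_n·x^(n−1). -/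
/-!
A pair of nonzero ideals is `(D * I, D * J)` for a unique ideal `D`, the greatest common divisor,
and a unique coprime pair `(I, J)`. Both norms are at most `x` exactly when
`N D ≤ x / max (N I) (N J)`, so the sum of the `n`-th powers is `∑ S (x / max (N I) (N J))` over
coprime pairs, where `S y = ∑_{N D ≤ y} (N D) ^ n`. The number of ideals of norm at most `y` is
asymptotic to `ρ * y`, with `ρ` the residue of the Dedekind zeta function, and Abel summation turns
this into `S y ∼ ρ * y ^ (n + 1) / (n + 1)`. Dominated convergence then gives the asymptotics of the
sum over coprime pairs: there are `O(y ^ 2)` pairs with `max (N I) (N J) ≤ y`, so the dominating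
series `∑ max (N I) (N J) ^ (-(n + 1))` converges as soon as `n > 1`.
-/

open Filter Topology Asymptotics MeasureTheory Ideal NumberField
open scoped nonZeroDivisors

section Counting

variable {ι κ : Type*} (N : ι → ℕ)

/-- The counting function `y ↦ #{i | N i ≤ y}` of a norm `N`, meaningful when `N` is Northcott. -/
noncomputable def normCount (y : ℝ) : ℝ := Nat.card {i // (N i : ℝ) ≤ y}

/-- The summatory function `y ↦ ∑_{N i ≤ y} N(i) ^ n` of the `n`-th power of a norm `N`, meaningful
when `N` is Northcott. -/
noncomputable def normPowSum (n : ℕ) (y : ℝ) : ℝ := ∑' i : {i // (N i : ℝ) ≤ y}, (N i : ℝ) ^ n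

theorem normPowSum_zero : normPowSum N 0 = normCount N := by
  ext y
  simp [normPowSum, normCount]

theorem normCount_nonneg (y : ℝ) : 0 ≤ normCount N y :=
  Nat.cast_nonneg _

variable {N} in
theorem normPowSum_eq_zero_of_lt_one (hN : ∀ i, 0 < N i) (n : ℕ) {y : ℝ} (hy : y < 1) :
    normPowSum N n y = 0 := by
  have : IsEmpty {i // (N i : ℝ) ≤ y} :=
    ⟨fun i ↦ (i.2.trans_lt hy).not_ge (mod_cast hN i)⟩
  exact tsum_empty

theorem normCount_max (M : κ → ℕ) (y : ℝ) :
    normCount (fun p : ι × κ ↦ max (N p.1) (M p.2)) y = normCount N y * normCount M y := by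
  have e : {p : ι × κ // ((max (N p.1) (M p.2) : ℕ) : ℝ) ≤ y} ≃
      {i // (N i : ℝ) ≤ y} × {j // (M j : ℝ) ≤ y} :=
    (Equiv.subtypeEquivRight fun p ↦ by rw [Nat.cast_max, max_le_iff]).trans
      Equiv.subtypeProdEquivProd
  rw [normCount, Nat.card_congr e, Nat.card_prod, Nat.cast_mul, normCount, normCount]

instance northcott_max (M : κ → ℕ) [Northcott N] [Northcott M] :
    Northcott fun p : ι × κ ↦ max (N p.1) (M p.2) where
  finite_le b := ((Northcott.finite_le (h := N) b).prod (Northcott.finite_le (h := M) b)).subset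
    fun p (hp : max (N p.1) (M p.2) ≤ b) ↦ max_le_iff.mp hp

variable [Northcott N]

instance finite_norm_le (y : ℝ) : Finite {i // (N i : ℝ) ≤ y} :=
  (Northcott.finite_le (h := N) ⌊y⌋₊).subset fun _ hi ↦ Nat.le_floor hi

theorem monotone_normPowSum (n : ℕ) : Monotone (normPowSum N n) := by
  intro y z hyz
  exact Summable.tsum_le_tsum_of_inj (Subtype.impEmbedding _ _ fun i hi ↦ hi.trans hyz)
    (Subtype.impEmbedding _ _ _).injective (fun _ _ ↦ by positivity) (fun _ ↦ le_rfl)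
    .of_finite .of_finite

theorem monotone_normCount : Monotone (normCount N) :=
  normPowSum_zero N ▸ monotone_normPowSum N 0

theorem normPowSum_eq_sum_card_fiber (n : ℕ) {y : ℝ} (hy : 0 ≤ y) :
    normPowSum N n y = ∑ k ∈ Finset.Icc 0 ⌊y⌋₊, (k : ℝ) ^ n * Nat.card {i // N i = k} := by
  classical
  have := Fintype.ofFinite {i // (N i : ℝ) ≤ y}
  have hmaps (i : {i // (N i : ℝ) ≤ y}) : N i ∈ Finset.Icc 0 ⌊y⌋₊ := by
    simpa using Nat.le_floor i.2
  rw [normPowSum, tsum_fintype,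
    ← Finset.sum_fiberwise_of_maps_to' (fun i _ ↦ hmaps i) fun k : ℕ ↦ (k : ℝ) ^ n]
  refine Finset.sum_congr rfl fun k hk ↦ ?_
  have hky : (k : ℝ) ≤ y := (Nat.le_floor_iff hy).mp (Finset.mem_Icc.mp hk).2
  have e : {i : {i // (N i : ℝ) ≤ y} // N i = k} ≃ {i // N i = k} :=
    Equiv.subtypeSubtypeEquivSubtype (q := fun i ↦ N i = k) fun {i} (h : N i = k) ↦ by rwa [h]
  rw [Finset.sum_const, nsmul_eq_mul, mul_comm, ← Nat.card_congr e, Nat.card_eq_fintype_card,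
    Fintype.card_subtype]

theorem normCount_eq_sum_card_fiber {y : ℝ} (hy : 0 ≤ y) :
    normCount N y = ∑ k ∈ Finset.Icc 0 ⌊y⌋₊, (Nat.card {i // N i = k} : ℝ) := by
  simp [← normPowSum_zero, normPowSum_eq_sum_card_fiber N 0 hy]

theorem normPowSum_eq_sub_integral (n : ℕ) {y : ℝ} (hy : 0 ≤ y) :
    normPowSum N n y =
      y ^ n * normCount N y - ∫ t in 0..y, n * t ^ (n - 1) * normCount N t := by
  have habel := sum_mul_eq_sub_integral_mul (fun k ↦ (Nat.card {i // N i = k} : ℝ))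
    (f := fun t : ℝ ↦ t ^ n) hy (fun t _ ↦ by fun_prop)
    (by simpa using Continuous.integrableOn_Icc (μ := volume) (by fun_prop))
  rw [normPowSum_eq_sum_card_fiber N n hy, habel, ← normCount_eq_sum_card_fiber N hy,
    intervalIntegral.integral_of_le hy]
  congr 1
  refine setIntegral_congr_fun measurableSet_Ioc fun t ht ↦ ?_
  simp [normCount_eq_sum_card_fiber N ht.1.le]

theorem normPowSum_div_eq_sub_integral (n : ℕ) {y : ℝ} (hy : 0 < y) :
    normPowSum N n y / y ^ (n + 1) =
      normCount N y / y - ∫ u in 0..1, n * u ^ (n - 1) * (normCount N (u * y) / y) := by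
  have hscale : ∫ t in 0..y, n * t ^ (n - 1) * normCount N t =
      y ^ (n + 1) * ∫ u in 0..1, n * u ^ (n - 1) * (normCount N (u * y) / y) := by
    have hsubst := intervalIntegral.mul_integral_comp_mul_right (a := 0) (b := 1)
      (f := fun t ↦ n * t ^ (n - 1) * normCount N t) y
    rw [zero_mul, one_mul] at hsubst
    rw [← hsubst, ← intervalIntegral.integral_const_mul, ← intervalIntegral.integral_const_mul]
    refine intervalIntegral.integral_congr fun u _ ↦ ?_
    rcases n with - | n
    · simp
    · simp only [Nat.add_sub_cancel, mul_pow]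
      field_simp
      ring
  rw [normPowSum_eq_sub_integral N n hy.le, hscale, sub_div,
    mul_div_cancel_left₀ _ (pow_pos hy _).ne', pow_succ, mul_div_mul_left _ _ (pow_pos hy n).ne']

end Counting

section Asymptotics

theorem tendsto_integral_mul_comp_mul_div {Φ : ℝ → ℝ} {l : ℝ} (hmono : Monotone Φ)
    (hnonneg : ∀ y, 0 ≤ Φ y) (hΦ : Tendsto (fun y ↦ Φ y / y) atTop (𝓝 l)) {g : ℝ → ℝ}
    (hg : IntervalIntegrable g volume 0 1) :
    Tendsto (fun y ↦ ∫ u in 0..1, g u * (Φ (u * y) / y)) atTop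
      (𝓝 (∫ u in 0..1, g u * (u * l))) := by
  refine intervalIntegral.tendsto_integral_filter_of_dominated_convergence
    (fun u ↦ ‖g u‖ * (l + 1)) (.of_forall fun y ↦ ?_) ?_ (hg.norm.mul_const _)
    (.of_forall fun u hu ↦ ?_)
  · have hmeas : Measurable fun u ↦ Φ (u * y) / y :=
      (hmono.measurable.comp (measurable_id.mul_const y)).div_const y
    rw [Set.uIoc_of_le zero_le_one]
    exact hg.aestronglyMeasurable.mul hmeas.aestronglyMeasurable
  · filter_upwards [eventually_gt_atTop 0, hΦ.eventually_le_const (lt_add_one l)] with y hy hle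
    refine .of_forall fun u hu ↦ ?_
    rw [Set.uIoc_of_le zero_le_one] at hu
    rw [norm_mul, Real.norm_of_nonneg (div_nonneg (hnonneg _) hy.le)]
    gcongr
    calc Φ (u * y) / y ≤ Φ y / y := by gcongr; exact hmono (mul_le_of_le_one_left hy.le hu.2)
      _ ≤ l + 1 := hle
  · rw [Set.uIoc_of_le zero_le_one] at hu
    have hlim := (hΦ.comp (tendsto_id.const_mul_atTop hu.1)).const_mul u
    refine (hlim.congr fun y ↦ ?_).const_mul _
    have := hu.1.ne'
    simp only [Function.comp, id]
    field_simp

theorem tendsto_normPowSum_div_pow {ι : Type*} {N : ι → ℕ} [Northcott N] {l : ℝ}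
    (hN : Tendsto (fun y ↦ normCount N y / y) atTop (𝓝 l)) (n : ℕ) :
    Tendsto (fun y ↦ normPowSum N n y / y ^ (n + 1)) atTop (𝓝 (l / (n + 1))) := by
  have hint : ∫ u in (0 : ℝ)..1, n * u ^ (n - 1) * (u * l) = n / (n + 1) * l := by
    have hpow (u : ℝ) : n * u ^ (n - 1) * (u * l) = n * l * u ^ n := by
      rcases n with - | n
      · simp
      · simp only [Nat.add_sub_cancel]; ring
    simp only [hpow, intervalIntegral.integral_const_mul, integral_pow, one_pow,
      zero_pow n.succ_ne_zero, sub_zero]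
    ring
  have hlim := hN.sub (tendsto_integral_mul_comp_mul_div (g := fun u ↦ n * u ^ (n - 1))
    (monotone_normCount N) (normCount_nonneg N) hN
    (Continuous.intervalIntegrable (by fun_prop) _ _))
  rw [hint, show l - n / (n + 1) * l = l / (n + 1) by field_simp; ring] at hlim
  refine hlim.congr' ?_
  filter_upwards [eventually_gt_atTop 0] with y hy
  exact (normPowSum_div_eq_sub_integral N n hy).symm

theorem summable_rpow_neg_of_normCount_isBigO {ι : Type*} {N : ι → ℕ} [Northcott N] {r s : ℝ}
    (hO : normCount N =O[atTop] fun y ↦ y ^ r) (hr : 0 ≤ r) (hrs : r < s) :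
    Summable fun i ↦ (N i : ℝ) ^ (-s) := by
  have (k : ℕ) : Finite {i // N i = k} :=
    (Northcott.finite_le (h := N) k).subset fun i hi ↦ hi.le
  have hcoeff : (fun m : ℕ ↦ ∑ k ∈ Finset.Icc 1 m, (Nat.card {i // N i = k} : ℝ)) =O[atTop]
      fun m : ℕ ↦ (m : ℝ) ^ r := by
    refine .trans (.of_norm_le fun m ↦ ?_) (hO.comp_tendsto tendsto_natCast_atTop_atTop)
    rw [Real.norm_of_nonneg (by positivity), Function.comp,
      normCount_eq_sum_card_fiber N m.cast_nonneg, Nat.floor_natCast]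
    gcongr
    exact zero_le_one
  have hL := LSeriesSummable_of_sum_norm_bigO_and_nonneg (s := s) hcoeff (by simp) hr (by simpa)
  rw [← (Equiv.sigmaFiberEquiv N).summable_iff,
    summable_sigma_of_nonneg fun _ ↦ by simp only [Function.comp]; positivity]
  refine ⟨fun k ↦ .of_finite, hL.norm.congr fun k ↦ ?_⟩
  have hfiber (i : {i // N i = k}) :
      ((fun i ↦ (N i : ℝ) ^ (-s)) ∘ Equiv.sigmaFiberEquiv N) ⟨k, i⟩ = (k : ℝ) ^ (-s) := by
    simp [Equiv.sigmaFiberEquiv, i.2]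
  simp only [hfiber, tsum_const, LSeries.norm_term_eq]
  split_ifs with hk
  · simp [hk, Real.zero_rpow (neg_ne_zero.mpr (hr.trans_lt hrs).ne')]
  · simp [div_eq_mul_inv, Real.rpow_neg]

theorem exists_norm_le_mul_pow {F : ℝ → ℝ} {s : ℕ} {l : ℝ} (hmono : Monotone F)
    (hzero : ∀ y < 1, F y = 0) (hF : Tendsto (fun y ↦ F y / y ^ s) atTop (𝓝 l)) :
    ∃ K, ∀ y, 0 < y → ‖F y‖ ≤ K * y ^ s := by
  have hnonneg (y : ℝ) : 0 ≤ F y :=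
    (hzero (min y 0) ((min_le_right _ _).trans_lt one_pos)).ge.trans (hmono (min_le_left _ _))
  obtain ⟨Y, hY⟩ := eventually_atTop.mp (hF.eventually_le_const (lt_add_one l))
  refine ⟨max (l + 1) (F Y), fun y hy ↦ ?_⟩
  have hK : 0 ≤ max (l + 1) (F Y) := le_max_of_le_right (hnonneg Y)
  rw [Real.norm_of_nonneg (hnonneg y)]
  rcases lt_or_ge y 1 with hy1 | hy1
  · rw [hzero y hy1]
    positivity
  rcases le_total Y y with hYy | hyY
  · exact ((div_le_iff₀ (by positivity)).mp (hY y hYy)).trans (by gcongr; exact le_max_left _ _)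
  · calc F y ≤ F Y := hmono hyY
      _ ≤ max (l + 1) (F Y) := le_max_right _ _
      _ ≤ max (l + 1) (F Y) * y ^ s := le_mul_of_one_le_right hK (one_le_pow₀ hy1)

theorem tendsto_tsum_comp_div_div_pow {ι : Type*} {F : ℝ → ℝ} {s : ℕ} {K l : ℝ} {M : ι → ℝ}
    (hbound : ∀ y, 0 < y → ‖F y‖ ≤ K * y ^ s)
    (hF : Tendsto (fun y ↦ F y / y ^ s) atTop (𝓝 l)) (hM : ∀ i, 0 < M i)
    (hsum : Summable fun i ↦ (M i ^ s)⁻¹) :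
    Tendsto (fun x ↦ (∑' i, F (x / M i)) / x ^ s) atTop (𝓝 (l * ∑' i, (M i ^ s)⁻¹)) := by
  simp only [← tsum_div_const, ← tsum_mul_left]
  refine tendsto_tsum_of_dominated_convergence (hsum.mul_left K) (fun i ↦ ?_) ?_
  · refine ((hF.comp (tendsto_id.atTop_div_const (hM i))).mul_const _).congr fun x ↦ ?_
    have := (hM i).ne'
    simp only [Function.comp, id, div_pow]
    field_simp
  · filter_upwards [eventually_gt_atTop 0] with x hx i
    rw [norm_div, Real.norm_of_nonneg (pow_nonneg hx.le s), div_le_iff₀ (by positivity)]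
    calc ‖F (x / M i)‖ ≤ K * (x / M i) ^ s := hbound _ (div_pos hx (hM i))
      _ = K * (M i ^ s)⁻¹ * x ^ s := by rw [div_pow]; ring

end Asymptotics

section GreatestCommonDivisor

theorem sup_mul_mul_of_isCoprime {R : Type*} [CommSemiring R] (D : Ideal R) {I J : Ideal R}
    (h : IsCoprime I J) : D * I ⊔ D * J = D := by
  rw [← Ideal.mul_sup, isCoprime_iff_sup_eq.mp h, mul_top]

variable {R : Type*} [CommRing R] [IsDedekindDomain R]

theorem exists_eq_mul_isCoprime (I J : (Ideal R)⁰) :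
    ∃ D I' J' : (Ideal R)⁰, IsCoprime (I' : Ideal R) J' ∧ I = D * I' ∧ J = D * J' := by
  obtain ⟨I', J', hI, hJ, hIJ⟩ := extract_gcd (I : Ideal R) J
  have hI0 : gcd (I : Ideal R) J * I' ∈ (Ideal R)⁰ := hI ▸ I.2
  have hJ0 : gcd (I : Ideal R) J * J' ∈ (Ideal R)⁰ := hJ ▸ J.2
  rw [mul_mem_nonZeroDivisors] at hI0 hJ0
  exact ⟨⟨_, hI0.1⟩, ⟨I', hI0.2⟩, ⟨J', hJ0.2⟩, isCoprime_iff_gcd.mpr (isUnit_iff_eq_one.mp hIJ),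
    Subtype.ext hI, Subtype.ext hJ⟩

variable (R) in
/-- The pairs of coprime nonzero ideals of `R`. -/
abbrev CoprimePair : Type _ := {p : (Ideal R)⁰ × (Ideal R)⁰ // IsCoprime (p.1 : Ideal R) p.2}

/-- Factoring out the greatest common divisor: a pair of nonzero ideals is `(D * I, D * J)` for a
unique ideal `D`, its greatest common divisor, and a unique coprime pair `(I, J)`. -/
noncomputable def gcdEquiv : CoprimePair R × (Ideal R)⁰ ≃ (Ideal R)⁰ × (Ideal R)⁰ :=
  Equiv.ofBijective (fun t ↦ (t.2 * t.1.1.1, t.2 * t.1.1.2)) <| by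
    constructor
    · rintro ⟨⟨⟨I, J⟩, h⟩, D⟩ ⟨⟨⟨I', J'⟩, h'⟩, D'⟩ heq
      obtain ⟨hI, hJ⟩ : D * I = D' * I' ∧ D * J = D' * J' := Prod.mk.inj heq
      have hD : D = D' := by
        have hsup : (↑(D * I) ⊔ ↑(D * J) : Ideal R) = ↑(D' * I') ⊔ ↑(D' * J') := by rw [hI, hJ]
        exact Subtype.ext ((sup_mul_mul_of_isCoprime _ h).symm.trans
          (hsup.trans (sup_mul_mul_of_isCoprime _ h')))
      subst hD
      obtain rfl := mul_left_cancel hI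
      obtain rfl := mul_left_cancel hJ
      rfl
    · rintro ⟨I, J⟩
      obtain ⟨D, I', J', h, rfl, rfl⟩ := exists_eq_mul_isCoprime I J
      exact ⟨(⟨(I', J'), h⟩, D), rfl⟩

theorem gcdEquiv_apply (t : CoprimePair R × (Ideal R)⁰) :
    gcdEquiv t = (t.2 * t.1.1.1, t.2 * t.1.1.2) :=
  rfl

theorem sup_gcdEquiv (t : CoprimePair R × (Ideal R)⁰) :
    ((gcdEquiv t).1 ⊔ (gcdEquiv t).2 : Ideal R) = t.2 :=
  sup_mul_mul_of_isCoprime _ t.1.2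

end GreatestCommonDivisor

section AbsNorm

theorem absNorm_map_ringEquiv {R S : Type*} [CommRing R] [IsDedekindDomain R] [Module.Free ℤ R]
    [CommRing S] [IsDedekindDomain S] [Module.Free ℤ S] (e : R ≃+* S) (I : Ideal R) :
    absNorm (I.map e) = absNorm I :=
  (Nat.card_congr (quotientEquiv I _ e rfl).toEquiv).symm

variable {R : Type*} [CommRing R] [IsDedekindDomain R] [Module.Free ℤ R]

/-- The absolute norm restricted to the monoid of nonzero ideals. -/
noncomputable abbrev absNorm₀ (I : (Ideal R)⁰) : ℕ := absNorm (I : Ideal R)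

/-- The larger of the norms of two nonzero ideals, so that the pairs of ideals of norm at most `x`
are those with `maxNorm p ≤ x`. -/
noncomputable def maxNorm (p : (Ideal R)⁰ × (Ideal R)⁰) : ℕ := max (absNorm₀ p.1) (absNorm₀ p.2)

theorem maxNorm_gcdEquiv (t : CoprimePair R × (Ideal R)⁰) :
    maxNorm (gcdEquiv t) = absNorm₀ t.2 * maxNorm t.1.1 := by
  simp only [maxNorm, absNorm₀, gcdEquiv_apply, Submonoid.coe_mul, map_mul, Nat.mul_max_mul_left]

theorem maxNorm_pos [Module.Finite ℤ R] (p : (Ideal R)⁰ × (Ideal R)⁰) : 0 < maxNorm p :=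
  lt_max_of_lt_left (absNorm_pos_of_nonZeroDivisors p.1)

instance northcott_absNorm₀ [CharZero R] [Module.Finite ℤ R] : Northcott (absNorm₀ (R := R)) where
  finite_le b := finite_setOfPred_absNorm_le₀ b

instance northcott_maxNorm [CharZero R] [Module.Finite ℤ R] : Northcott (maxNorm (R := R)) :=
  northcott_max absNorm₀ absNorm₀

theorem normCount_maxNorm (y : ℝ) :
    normCount (maxNorm (R := R)) y = normCount (absNorm₀ (R := R)) y ^ 2 :=
  (normCount_max _ _ y).trans (sq _).symm

variable (R) in
/-- The pairs of nonzero ideals of `R` with both norms at most `x`; for `R = ℤ[i]` this is `P x`. -/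
def normLePairs (x : ℝ) : Set (Ideal R × Ideal R) :=
  {p | p.1 ≠ ⊥ ∧ p.2 ≠ ⊥ ∧ (absNorm p.1 : ℝ) ≤ x ∧ (absNorm p.2 : ℝ) ≤ x}

/-- Elements of `normLePairs R x` as pairs in the monoid of nonzero ideals. -/
noncomputable def maxNormLeEquiv (x : ℝ) :
    {p : (Ideal R)⁰ × (Ideal R)⁰ // (maxNorm p : ℝ) ≤ x} ≃ normLePairs R x where
  toFun p := ⟨(p.1.1, p.1.2), mem_nonZeroDivisors_iff_ne_zero.mp p.1.1.2,
    mem_nonZeroDivisors_iff_ne_zero.mp p.1.2.2, by simpa [maxNorm] using p.2⟩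
  invFun p := ⟨(⟨p.1.1, mem_nonZeroDivisors_iff_ne_zero.mpr p.2.1⟩,
    ⟨p.1.2, mem_nonZeroDivisors_iff_ne_zero.mpr p.2.2.1⟩), by simpa [maxNorm] using p.2.2.2⟩

theorem ncard_normLePairs (x : ℝ) :
    ((normLePairs R x).ncard : ℝ) = normCount (absNorm₀ (R := R)) x ^ 2 := by
  rw [← Nat.card_coe_set_eq, ← Nat.card_congr (maxNormLeEquiv x), ← normCount_maxNorm, normCount]

/-- The pairs of ideals of norm at most `x`, sorted by the coprime pair left after factoring out the
greatest common divisor. -/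
noncomputable def sigmaEquivNormLePairs [Module.Finite ℤ R] (x : ℝ) :
    (Σ q : CoprimePair R, {D : (Ideal R)⁰ // (absNorm₀ D : ℝ) ≤ x / maxNorm q.1}) ≃
      normLePairs R x :=
  have hiff (t : CoprimePair R × (Ideal R)⁰) :
      (absNorm₀ t.2 : ℝ) ≤ x / maxNorm t.1.1 ↔ (maxNorm (gcdEquiv t) : ℝ) ≤ x := by
    rw [maxNorm_gcdEquiv, Nat.cast_mul, le_div_iff₀ (mod_cast maxNorm_pos _)]
  (Equiv.subtypeProdEquivSigmaSubtype fun (q : CoprimePair R) (D : (Ideal R)⁰) ↦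
    (absNorm₀ D : ℝ) ≤ x / maxNorm q.1).symm.trans
      ((gcdEquiv.subtypeEquiv hiff).trans (maxNormLeEquiv x))

theorem tsum_absNorm_sup_pow [CharZero R] [Module.Finite ℤ R] (n : ℕ) (x : ℝ) :
    ∑' p : normLePairs R x, (absNorm (p.1.1 ⊔ p.1.2) : ℝ) ^ n =
      ∑' q : CoprimePair R, normPowSum (absNorm₀ (R := R)) n (x / maxNorm q.1) := by
  have : Finite (normLePairs R x) := .of_equiv _ (maxNormLeEquiv x)
  have := Finite.of_equiv _ (sigmaEquivNormLePairs (R := R) x).symm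
  rw [← (sigmaEquivNormLePairs x).tsum_eq, Summable.tsum_sigma .of_finite]
  refine tsum_congr fun q ↦ tsum_congr fun D ↦ ?_
  exact congrArg (fun I : Ideal R ↦ (absNorm I : ℝ) ^ n) (sup_gcdEquiv (q, D.1))

end AbsNorm

section NumberRing

theorem numberField_of_isFractionRing (R K : Type*) [CommRing R] [IsDomain R] [CharZero R]
    [Module.Finite ℤ R] [Field K] [Algebra R K] [IsFractionRing R K] : NumberField K :=
  have : CharZero K := charZero_of_injective_algebraMap (IsFractionRing.injective R K)
  { to_finiteDimensional := .of_isLocalization ℤ R ℤ⁰ }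

variable (R : Type*) [CommRing R] [IsDedekindDomain R] [CharZero R] [Module.Finite ℤ R]

instance numberField_fractionRing : NumberField (FractionRing R) :=
  numberField_of_isFractionRing R _

theorem tendsto_normCount_absNorm₀_div :
    Tendsto (fun y ↦ normCount (absNorm₀ (R := R)) y / y) atTop
      (𝓝 (dedekindZeta_residue (FractionRing R))) := by
  let e : 𝓞 (FractionRing R) ≃+* R := RingOfIntegers.equiv R
  let eIdeal : (Ideal (𝓞 (FractionRing R)))⁰ ≃ (Ideal R)⁰ :=
    e.idealComapOrderIso.symm.toEquiv.subtypeEquiv fun I ↦ by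
      simp [mem_nonZeroDivisors_iff_ne_zero, map_eq_bot_iff_of_injective e.injective]
  refine (NumberField.Ideal.tendsto_norm_le_div_atTop₀ (FractionRing R)).congr fun y ↦ ?_
  rw [normCount, Nat.card_congr (eIdeal.subtypeEquiv fun I ↦ ?_)]
  change _ ↔ (absNorm (I.1.map e) : ℝ) ≤ y
  rw [absNorm_map_ringEquiv]

theorem summable_maxNorm_pow_inv {s : ℕ} (hs : 2 < s) :
    Summable fun q : CoprimePair R ↦ ((maxNorm q.1 : ℝ) ^ s)⁻¹ := by
  have hO : normCount (absNorm₀ (R := R)) =O[atTop] fun y ↦ y :=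
    isBigO_of_div_tendsto_nhds ((eventually_ne_atTop 0).mono fun _ h h0 ↦ absurd h0 h) _
      (tendsto_normCount_absNorm₀_div R)
  have hOmax : normCount (maxNorm (R := R)) =O[atTop] fun y ↦ y ^ (2 : ℝ) := by
    simpa [funext normCount_maxNorm] using hO.pow 2
  have hsum := summable_rpow_neg_of_normCount_isBigO hOmax zero_le_two
    (mod_cast hs : (2 : ℝ) < s)
  simpa [Real.rpow_neg, Function.comp_def] using hsum.comp_injective Subtype.val_injective

theorem higherMoment_asymptotic_general {n : ℕ} (hn : 1 < n) :
    Tendsto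
      (fun x : ℝ ↦
        ((∑' p : normLePairs R x, (absNorm (p.1.1 ⊔ p.1.2) : ℝ) ^ n) /
          ((normLePairs R x).ncard : ℝ)) / x ^ (n - 1))
      atTop
      (𝓝 ((∑' q : CoprimePair R, ((maxNorm q.1 : ℝ) ^ (n + 1))⁻¹) /
        ((n + 1) * dedekindZeta_residue (FractionRing R)))) := by
  have hcount := tendsto_normCount_absNorm₀_div R
  have hres := dedekindZeta_residue_ne_zero (FractionRing R)
  have hpow := tendsto_normPowSum_div_pow hcount n
  obtain ⟨K, hK⟩ := exists_norm_le_mul_pow (monotone_normPowSum absNorm₀ n)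
    (fun y ↦ normPowSum_eq_zero_of_lt_one absNorm_pos_of_nonZeroDivisors n) hpow
  have hsum := tendsto_tsum_comp_div_div_pow hK hpow (fun q : CoprimePair R ↦
    (mod_cast maxNorm_pos q.1 : (0 : ℝ) < maxNorm q.1)) (summable_maxNorm_pow_inv R (by lia))
  convert (hsum.div (hcount.pow 2) (pow_ne_zero 2 hres)).congr' ?_ using 2
  · field_simp
  · filter_upwards [eventually_gt_atTop 0] with x hx
    have hxpow : x ^ (n + 1) = x ^ (n - 1) * x ^ 2 := by rw [← pow_add]; congr 1; lia
    rw [tsum_absNorm_sup_pow, ncard_normLePairs, Pi.div_apply, div_pow, hxpow]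
    field_simp

end NumberRing

instance finite_zsqrtd (d : ℤ) : Module.Finite ℤ (ℤ√d) := by
  refine ⟨⟨{1, Zsqrtd.sqrtd}, eq_top_iff.mpr fun z _ ↦ ?_⟩⟩
  rw [Finset.coe_insert, Finset.coe_singleton, Submodule.mem_span_pair]
  exact ⟨z.re, z.im, by ext <;> simp⟩

theorem higherMoment_asymptotic (n : ℕ) (hn : 2 < n) :
    ∃ c : ℝ, Filter.Tendsto
      (fun x : ℝ =>
        ((∑' p : P x, (normI (p.1.1 ⊔ p.1.2) : ℝ) ^ n) / ((P x).ncard : ℝ)) / x ^ (n - 1))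
      Filter.atTop (nhds c) :=
  -- `normI` and `absNorm` agree definitionally, hence so do `P` and `normLePairs GaussianInt`.
  have : Module.Finite ℤ GaussianInt := finite_zsqrtd (-1)
  ⟨_, higherMoment_asymptotic_general GaussianInt (by lia)⟩
end
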